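/- (All functions are locally s-harmonic up to a small error.) Let n ≥ 1, s ∈ (0,1), k ∈ ℕ, and let f : ℝⁿ → ℝ be k times continuously differentiable on an open neighborhood of the closed unit ball B̄₁. Then for every ε > 0 there exist R > 1 and a function u : ℝⁿ → ℝ such that: u is Hölder continuous of exponent s on ℝⁿ; u = 0 on ℝⁿ ∖ B_R; u is s-harmonic at every point of B₁; u is infinitely differentiable on B₁; and for every multi-index β with |β| ≤ k, sup_{x ∈ B₁} |D^β u(x) − D^β f(x)| < ε. -/

import Mathlib

open MeasureTheory Filter Metric Set
open scoped Topology

/-- The partial derivative of `f : ℝⁿ → ℝ` in the `i`-th coordinate direction. -/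
noncomputable def partialDeriv (n : ℕ) (i : Fin n)
    (f : EuclideanSpace ℝ (Fin n) → ℝ) : EuclideanSpace ℝ (Fin n) → ℝ :=
  fun x => fderiv ℝ f x (EuclideanSpace.single i 1)

/-- The multi-index derivative `D^β f = ∂₁^{β₁} ⋯ ∂ₙ^{βₙ} f`. -/
noncomputable def multiDeriv (n : ℕ) (β : Fin n → ℕ)
    (f : EuclideanSpace ℝ (Fin n) → ℝ) : EuclideanSpace ℝ (Fin n) → ℝ :=
  ((List.ofFn (fun i : Fin n => (partialDeriv n i)^[β i])).foldr (· ∘ ·) id) f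

/-!
The Getoor functions `x ↦ (m - |x - p|²)₊ ^ s` all have the same constant fractional Laplacian in
the ball where they are positive, whatever `m` and `p`. The difference of two of them with a common
centre is therefore a compactly supported function that is `s`-harmonic on the smaller ball. By
homogeneity this produces, for small `t > 0`, the functions `x ↦ ψ (-t |x - p|²)` with
`ψ z = (1 + z)₊ ^ s - (2 + z)₊ ^ s`. No Taylor coefficient of `ψ` at `0` vanishes, so letting
`t → 0` yields one power `|x - p| ^ (2 j)` after another in the `C^k` closure of the compactly
supported functions that are `s`-harmonic on a given compact set. This closure thus contains the
Landau kernels `x ↦ (1 - |x - y|² / r²) ^ m`; as these span a finite-dimensional space when `y`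
varies, it also contains their superpositions, which are `C^k` dense by approximate identity.
-/

/-- The truncated power `x₊ ^ a`. -/
noncomputable def truncPow (a x : ℝ) : ℝ := max x 0 ^ a

section TruncPow

variable {a s x y : ℝ}

lemma truncPow_nonneg (a x : ℝ) : 0 ≤ truncPow a x := Real.rpow_nonneg (le_max_right _ _) _

lemma truncPow_of_nonneg (hx : 0 ≤ x) : truncPow a x = x ^ a := by
  rw [truncPow, max_eq_left hx]

lemma truncPow_of_nonpos (ha : a ≠ 0) (hx : x ≤ 0) : truncPow a x = 0 := by
  rw [truncPow, max_eq_right hx, Real.zero_rpow ha]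

@[fun_prop]
lemma measurable_truncPow (a : ℝ) : Measurable (truncPow a) :=
  (measurable_id.max measurable_const).pow_const a

lemma continuous_truncPow (ha : 0 ≤ a) : Continuous (truncPow a) :=
  (continuous_id.max continuous_const).rpow_const fun _ => Or.inr ha

lemma contDiffAt_truncPow (a : ℝ) (hx : 0 < x) {n : WithTop ℕ∞} : ContDiffAt ℝ n (truncPow a) x :=
  (Real.contDiffAt_rpow_const_of_ne hx.ne').congr_of_eventuallyEq
    ((lt_mem_nhds hx).mono fun _ hy => truncPow_of_nonneg (le_of_lt hy))

lemma truncPow_mul (a : ℝ) (hx : 0 ≤ x) (y : ℝ) :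
    truncPow a (x * y) = x ^ a * truncPow a y := by
  rw [truncPow, truncPow, ← Real.mul_rpow hx (le_max_right _ _), mul_max_of_nonneg _ _ hx, mul_zero]

lemma truncPow_le_truncPow (ha : 0 ≤ a) (hxy : x ≤ y) : truncPow a x ≤ truncPow a y :=
  Real.rpow_le_rpow (le_max_right _ _) (max_le_max_right _ hxy) ha

lemma truncPow_le_truncPow_of_nonpos (ha : a ≤ 0) (hx : 0 < x) (hxy : x ≤ y) :
    truncPow a y ≤ truncPow a x := by
  rw [truncPow_of_nonneg hx.le, truncPow_of_nonneg (hx.le.trans hxy)]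
  exact Real.rpow_le_rpow_of_nonpos hx hxy ha

lemma hasDerivAt_truncPow (ha : a ≠ 0) (ha' : a - 1 ≠ 0) (hx : x ≠ 0) :
    HasDerivAt (truncPow a) (a * truncPow (a - 1) x) x := by
  rcases hx.lt_or_gt with hneg | hpos
  · rw [truncPow_of_nonpos ha' hneg.le, mul_zero]
    exact (hasDerivAt_const x 0).congr_of_eventuallyEq
      ((gt_mem_nhds hneg).mono fun y hy => truncPow_of_nonpos ha (le_of_lt hy))
  · rw [truncPow_of_nonneg hpos.le]
    exact (Real.hasDerivAt_rpow_const (Or.inl hpos.ne')).congr_of_eventuallyEq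
      ((lt_mem_nhds hpos).mono fun y hy => truncPow_of_nonneg (le_of_lt hy))

lemma intervalIntegrable_truncPow (ha : -1 < a) (ha' : a ≠ 0) (x y : ℝ) :
    IntervalIntegrable (truncPow a) volume x y := by
  have h_ind : truncPow a = (Ioi 0).indicator (fun t => t ^ a) := by
    ext t
    by_cases ht : 0 < t
    · rw [indicator_of_mem (mem_Ioi.2 ht), truncPow_of_nonneg ht.le]
    · rw [indicator_of_notMem (notMem_Ioi.2 (not_lt.1 ht)), truncPow_of_nonpos ha' (not_lt.1 ht)]
  rw [h_ind, intervalIntegrable_iff]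
  exact (intervalIntegrable_iff.1 (intervalIntegral.intervalIntegrable_rpow' ha)).indicator
    measurableSet_Ioi

lemma integral_truncPow (hs : s ∈ Ioo (0 : ℝ) 1) (x y : ℝ) :
    ∫ t in x..y, truncPow (s - 1) t = (truncPow s y - truncPow s x) / s := by
  have hs' : s - 1 ≠ 0 := (sub_neg.2 hs.2).ne
  rw [eq_div_iff hs.1.ne', mul_comm, ← intervalIntegral.integral_const_mul]
  exact integral_eq_of_hasDerivAt_off_countable _ _ (countable_singleton 0)
    (continuous_truncPow hs.1.le).continuousOn
    (fun t ht => hasDerivAt_truncPow hs.1.ne' hs' ht.2)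
    ((intervalIntegrable_truncPow (by linarith [hs.1]) hs' x y).const_mul s)

lemma holderWith_truncPow (hs : s ∈ Icc (0 : ℝ) 1) : HolderWith 1 s.toNNReal (truncPow s) := by
  have h_le {x y : ℝ} (hxy : x ≤ y) : truncPow s y - truncPow s x ≤ (y - x) ^ s := by
    have h_max : max y 0 ≤ max x 0 + (y - x) :=
      max_le (by linarith [le_max_left x 0]) (by linarith [le_max_right x 0])
    rw [sub_le_iff_le_add']
    exact (Real.rpow_le_rpow (le_max_right _ _) h_max hs.1).trans
      (Real.rpow_add_le_add_rpow (le_max_right _ _) (sub_nonneg.2 hxy) hs.1 hs.2)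
  have h_dist (x y : ℝ) : dist (truncPow s x) (truncPow s y) ≤ dist x y ^ s := by
    wlog hxy : x ≤ y generalizing x y
    · rw [dist_comm, dist_comm x]
      exact this y x (le_of_not_ge hxy)
    rw [dist_comm, dist_comm x, Real.dist_eq, Real.dist_eq,
      abs_of_nonneg (sub_nonneg.2 (truncPow_le_truncPow hs.1 hxy)),
      abs_of_nonneg (sub_nonneg.2 hxy)]
    exact h_le hxy
  intro x y
  rw [ENNReal.coe_one, one_mul, edist_dist, edist_dist, Real.coe_toNNReal s hs.1,
    ENNReal.ofReal_rpow_of_nonneg dist_nonneg hs.1]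
  exact ENNReal.ofReal_le_ofReal (h_dist x y)

end TruncPow

/-! ### The one-dimensional identity behind the Getoor formula -/

section Chord

variable {s : ℝ}

lemma truncPow_sq_sub_le (hs : s ∈ Ioo (0 : ℝ) 1) {m v : ℝ} (hm : 1 ≤ m) (hv : -√m ≤ v) :
    truncPow (s - 1) (v ^ 2 - m) ≤ truncPow (s - 1) (v - √m) := by
  have h_one : 1 ≤ √m := Real.one_le_sqrt.2 hm
  have h_sq : √m ^ 2 = m := Real.sq_sqrt (by linarith)
  rcases le_or_gt v (√m) with h | h
  · rw [truncPow_of_nonpos (sub_neg.2 hs.2).ne (by nlinarith : v ^ 2 - m ≤ 0)]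
    exact truncPow_nonneg _ _
  · exact truncPow_le_truncPow_of_nonpos (sub_nonpos.2 hs.2.le) (sub_pos.2 h) (by nlinarith)

lemma intervalIntegrable_truncPow_sq_sub (hs : s ∈ Ioo (0 : ℝ) 1) {m a b : ℝ} (hm : 1 ≤ m)
    (ha : -√m ≤ a) (hb : -√m ≤ b) :
    IntervalIntegrable (fun v => truncPow (s - 1) (v ^ 2 - m)) volume a b := by
  have h_dom := (intervalIntegrable_truncPow (by linarith [hs.1]) (sub_neg.2 hs.2).ne
    (a - √m) (b - √m)).comp_sub_right (√m)
  simp only [sub_add_cancel] at h_dom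
  refine h_dom.mono_fun' (Measurable.aestronglyMeasurable (by fun_prop))
    ((ae_restrict_mem measurableSet_uIoc).mono fun v hv => ?_)
  refine (Real.norm_of_nonneg (truncPow_nonneg _ _)).trans_le ?_
  exact truncPow_sq_sub_le hs hm ((le_min ha hb).trans hv.1.le)

/-- The integrand whose two iterated integrals are compared: its antiderivative in `g` is the
truncated power of a chord, while in `w` it is a translate, by `g`, of the even function
`v ↦ (v² - (1 + g²))₊ ^ (s - 1)`. -/
noncomputable def chordDeriv (s w g : ℝ) : ℝ := truncPow (s - 1) (w ^ 2 + 2 * g * w - 1)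

lemma chordDeriv_eq (s w g : ℝ) :
    chordDeriv s w g = truncPow (s - 1) ((w + g) ^ 2 - (1 + g ^ 2)) := by
  rw [chordDeriv]; ring_nf

lemma measurable_chordDeriv (s : ℝ) : Measurable (Function.uncurry (chordDeriv s)) :=
  (measurable_truncPow _).comp
    (by fun_prop : Measurable fun q : ℝ × ℝ => q.1 ^ 2 + 2 * q.2 * q.1 - 1)

lemma neg_sqrt_one_add_sq_le (g : ℝ) : -√(1 + g ^ 2) ≤ g :=
  neg_le.1 ((neg_le_abs g).trans (Real.abs_le_sqrt (by linarith)))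

lemma integral_chordDeriv_right (hs : s ∈ Ioo (0 : ℝ) 1) {w : ℝ} (hw : 0 < w) (a b : ℝ) :
    ∫ g in a..b, chordDeriv s w g =
      (truncPow s (w ^ 2 + 2 * b * w - 1) - truncPow s (w ^ 2 + 2 * a * w - 1)) / (2 * s * w) := by
  have h_lin : ∀ g, w ^ 2 + 2 * g * w - 1 = 2 * w * g + (w ^ 2 - 1) := fun g => by ring
  simp only [chordDeriv, h_lin]
  rw [intervalIntegral.integral_comp_mul_add _ (by positivity), integral_truncPow hs, smul_eq_mul]
  have := hs.1.ne'
  field_simp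

lemma integrable_chordDeriv_prod (hs : s ∈ Ioo (0 : ℝ) 1) (W a b : ℝ) :
    Integrable (Function.uncurry (chordDeriv s))
      ((volume.restrict (Ioc 0 W)).prod (volume.restrict (uIoc a b))) := by
  rcases le_total W 0 with hW | hW
  · simp [Ioc_eq_empty_of_le hW]
  set θ : ℝ → ℝ := fun g => g - √(1 + g ^ 2)
  have h_cont : Continuous θ := by fun_prop
  set D : ℝ × ℝ → ℝ := fun q => truncPow (s - 1) (q.1 + θ q.2)
  have hs' : s - 1 ≠ 0 := (sub_neg.2 hs.2).ne
  have h_slice (g : ℝ) : IntervalIntegrable (fun w => D (w, g)) volume 0 W := by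
    simpa using (intervalIntegrable_truncPow (by linarith [hs.1]) hs' (0 + θ g)
      (W + θ g)).comp_add_right (θ g)
  have h_integral (g : ℝ) :
      ∫ w in Ioc 0 W, ‖D (w, g)‖ = (truncPow s (W + θ g) - truncPow s (0 + θ g)) / s := by
    simp only [D, Real.norm_of_nonneg (truncPow_nonneg _ _)]
    rw [← intervalIntegral.integral_of_le hW,
      intervalIntegral.integral_comp_add_right (truncPow (s - 1)), integral_truncPow hs]
  have h_dom : Integrable D ((volume.restrict (Ioc 0 W)).prod (volume.restrict (uIoc a b))) := by
    refine (integrable_prod_iff' (by fun_prop)).2 ⟨.of_forall fun g => ?_, ?_⟩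
    · exact (intervalIntegrable_iff_integrableOn_Ioc_of_le hW).1 (h_slice g)
    · simp only [h_integral]
      have h_tp := continuous_truncPow hs.1.le
      exact intervalIntegrable_iff.1 (Continuous.intervalIntegrable (by fun_prop) a b)
  refine h_dom.mono' (measurable_chordDeriv s).aestronglyMeasurable ?_
  have h_pos : ∀ᵐ q ∂(volume.restrict (Ioc 0 W)).prod (volume.restrict (uIoc a b)), 0 < q.1 :=
    Measure.quasiMeasurePreserving_fst.ae ((ae_restrict_mem measurableSet_Ioc).mono fun _ h => h.1)
  filter_upwards [h_pos] with q hq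
  refine (Real.norm_of_nonneg (truncPow_nonneg _ _)).trans_le ?_
  refine (congrArg _ (by ring)).trans_le ((truncPow_sq_sub_le hs (by nlinarith : 1 ≤ 1 + q.2 ^ 2)
    (by linarith [neg_sqrt_one_add_sq_le q.2] : _ ≤ q.1 + q.2)).trans_eq ?_)
  exact congrArg _ (add_sub_assoc _ _ _)

lemma integral_chordDeriv_left (s W g : ℝ) :
    ∫ w in 0..W, chordDeriv s w g = ∫ v in g..(W + g), truncPow (s - 1) (v ^ 2 - (1 + g ^ 2)) := by
  simp only [chordDeriv_eq]
  rw [intervalIntegral.integral_comp_add_right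
    (fun v => truncPow (s - 1) (v ^ 2 - (1 + g ^ 2))), zero_add]

lemma integral_chordDeriv_sub (hs : s ∈ Ioo (0 : ℝ) 1) {W g : ℝ} (hg : |g| ≤ W) :
    (∫ w in 0..W, chordDeriv s w g) - ∫ w in 0..W, chordDeriv s w (-g) =
      ∫ v in (W - g)..(W + g), truncPow (s - 1) (v ^ 2 - (1 + g ^ 2)) := by
  have h_int {a b : ℝ} (ha : -√(1 + g ^ 2) ≤ a) (hb : -√(1 + g ^ 2) ≤ b) :=
    intervalIntegrable_truncPow_sq_sub hs (by nlinarith [sq_nonneg g] : 1 ≤ 1 + g ^ 2) ha hb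
  have h_pos := neg_sqrt_one_add_sq_le g
  have h_neg := neg_sqrt_one_add_sq_le (-g)
  rw [neg_sq] at h_neg
  have := Real.sqrt_nonneg (1 + g ^ 2)
  obtain ⟨hgW, hgW'⟩ := abs_le.1 hg
  have h_mid : ∫ v in (-g)..g, truncPow (s - 1) (v ^ 2 - (1 + g ^ 2)) = 0 := by
    refine (intervalIntegral.integral_congr fun v hv => ?_).trans intervalIntegral.integral_zero
    refine truncPow_of_nonpos (sub_neg.2 hs.2).ne ?_
    rcases mem_uIcc.1 hv with ⟨_, _⟩ | ⟨_, _⟩ <;> nlinarith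
  rw [integral_chordDeriv_left, integral_chordDeriv_left, neg_sq, ← sub_eq_add_neg]
  have h_left := intervalIntegral.integral_add_adjacent_intervals (h_int h_neg h_pos)
    (h_int h_pos (by linarith : _ ≤ W + g))
  have h_right := intervalIntegral.integral_add_adjacent_intervals
    (h_int h_neg (by linarith : _ ≤ W - g))
    (h_int (by linarith : _ ≤ W - g) (by linarith : _ ≤ W + g))
  linarith

lemma norm_integral_chordDeriv_sub_le (hs : s ∈ Ioo (0 : ℝ) 1) {C W g : ℝ} (hg : |g| ≤ C)
    (hW : 2 * C + 1 < W) :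
    ‖(∫ w in 0..W, chordDeriv s w g) - ∫ w in 0..W, chordDeriv s w (-g)‖ ≤
      2 * C * (W - 2 * C - 1) ^ (s - 1) := by
  have hC : 0 ≤ C := (abs_nonneg g).trans hg
  obtain ⟨hgC, hgC'⟩ := abs_le.1 hg
  have h_pow : 0 ≤ (W - 2 * C - 1) ^ (s - 1) := Real.rpow_nonneg (by linarith) _
  rw [integral_chordDeriv_sub hs (by linarith)]
  refine (intervalIntegral.norm_integral_le_of_norm_le_const
    (C := (W - 2 * C - 1) ^ (s - 1)) fun v hv => ?_).trans ?_
  · have hv_low : W - C ≤ v := (le_min (by linarith) (by linarith)).trans hv.1.le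
    have h_sqrt : √(1 + g ^ 2) ≤ 1 + C :=
      Real.sqrt_le_left (by linarith) |>.2 (by nlinarith [sq_abs g, abs_nonneg g])
    rw [Real.norm_of_nonneg (truncPow_nonneg _ _)]
    calc truncPow (s - 1) (v ^ 2 - (1 + g ^ 2))
        ≤ truncPow (s - 1) (v - √(1 + g ^ 2)) :=
          truncPow_sq_sub_le hs (by nlinarith) (by linarith [Real.sqrt_nonneg (1 + g ^ 2)])
      _ ≤ truncPow (s - 1) (W - 2 * C - 1) :=
          truncPow_le_truncPow_of_nonpos (by linarith [hs.2]) (by linarith) (by linarith)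
      _ = (W - 2 * C - 1) ^ (s - 1) := truncPow_of_nonneg (by linarith)
  · have h_len : |W + g - (W - g)| ≤ 2 * C := by
      rw [show W + g - (W - g) = 2 * g by ring, abs_mul, abs_two]; linarith
    rw [mul_comm]
    gcongr

/-- The symmetrised second difference of `(1 - |x|²)₊ ^ s` along a line, divided by `t ^ (1 + 2s)`
and normalised to be centred at an interior point where the function is `1`. -/
noncomputable def chordKernel (s c t : ℝ) : ℝ :=
  (2 - truncPow s (1 - 2 * c * t - t ^ 2) - truncPow s (1 + 2 * c * t - t ^ 2)) * t ^ (-1 - 2 * s)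

@[fun_prop]
lemma measurable_chordKernel (s : ℝ) : Measurable (Function.uncurry (chordKernel s)) := by
  unfold chordKernel Function.uncurry
  fun_prop

lemma integrableOn_chordKernel (hs : 0 < s) (c : ℝ) {δ : ℝ} (hδ : 0 < δ) :
    IntegrableOn (chordKernel s c) (Ioi δ) := by
  refine Integrable.mono' ((integrableOn_Ioi_rpow_of_lt (a := -1 - 2 * s) (by linarith)
    hδ).const_mul (2 + 2 * truncPow s (1 + c ^ 2)))
    ((measurable_chordKernel s).comp measurable_prodMk_left).aestronglyMeasurable
    ((ae_restrict_mem measurableSet_Ioi).mono fun t ht => ?_)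
  have h_rpow : 0 ≤ t ^ (-1 - 2 * s) := Real.rpow_nonneg (hδ.le.trans (le_of_lt ht)) _
  rw [chordKernel, norm_mul, Real.norm_of_nonneg h_rpow]
  gcongr
  have h_left : truncPow s (1 - 2 * c * t - t ^ 2) ≤ truncPow s (1 + c ^ 2) :=
    truncPow_le_truncPow hs.le (by nlinarith [sq_nonneg (c + t)])
  have h_right : truncPow s (1 + 2 * c * t - t ^ 2) ≤ truncPow s (1 + c ^ 2) :=
    truncPow_le_truncPow hs.le (by nlinarith [sq_nonneg (c - t)])
  have h_left' := truncPow_nonneg s (1 - 2 * c * t - t ^ 2)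
  have h_right' := truncPow_nonneg s (1 + 2 * c * t - t ^ 2)
  exact abs_le.2 ⟨by linarith, by linarith⟩

lemma integral_Ioi_eq_integral_inv {δ : ℝ} (hδ : 0 < δ) (f : ℝ → ℝ) :
    ∫ t in Ioi δ, f t = ∫ w in 0..δ⁻¹, (w ^ 2)⁻¹ * f w⁻¹ := by
  have h_image : (fun w : ℝ => w⁻¹) '' Ioo 0 δ⁻¹ = Ioi δ := by
    rw [image_inv_eq_inv, inv_Ioo_0_left (inv_pos.2 hδ), inv_inv]
  rw [← h_image, integral_image_eq_integral_abs_deriv_smul measurableSet_Ioo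
    (fun w hw => (hasDerivAt_inv hw.1.ne').hasDerivWithinAt) inv_injective.injOn,
    intervalIntegral.integral_of_le (inv_pos.2 hδ).le, integral_Ioc_eq_integral_Ioo]
  simp only [abs_neg, abs_inv, abs_sq, smul_eq_mul]

lemma inv_sq_mul_chordKernel_inv (s c : ℝ) {w : ℝ} (hw : 0 < w) :
    (w ^ 2)⁻¹ * chordKernel s c w⁻¹ = (2 * w ^ (2 * s) - truncPow s (w ^ 2 - 2 * c * w - 1)
      - truncPow s (w ^ 2 + 2 * c * w - 1)) / w := by
  have h_scale (z : ℝ) : truncPow s (w⁻¹ ^ 2 * z) = (w ^ (2 * s))⁻¹ * truncPow s z := by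
    rw [truncPow_mul _ (by positivity), ← Real.rpow_natCast, ← Real.rpow_mul (by positivity),
      Real.inv_rpow hw.le, Nat.cast_ofNat]
  have h_left : 1 - 2 * c * w⁻¹ - w⁻¹ ^ 2 = w⁻¹ ^ 2 * (w ^ 2 - 2 * c * w - 1) := by field_simp
  have h_right : 1 + 2 * c * w⁻¹ - w⁻¹ ^ 2 = w⁻¹ ^ 2 * (w ^ 2 + 2 * c * w - 1) := by field_simp
  have h_rpow : w⁻¹ ^ (-1 - 2 * s) = w * w ^ (2 * s) := by
    rw [Real.inv_rpow hw.le, ← Real.rpow_neg hw.le, neg_sub, sub_neg_eq_add, add_comm,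
      Real.rpow_add hw, Real.rpow_one]
  have : 0 < w ^ (2 * s) := Real.rpow_pos_of_pos hw _
  rw [chordKernel, h_left, h_right, h_scale, h_scale, h_rpow]
  field_simp

lemma inv_sq_mul_chordKernel_inv_sub (hs : s ∈ Ioo (0 : ℝ) 1) (c : ℝ) {w : ℝ} (hw : 0 < w) :
    (w ^ 2)⁻¹ * (chordKernel s c w⁻¹ - chordKernel s 0 w⁻¹) =
      2 * s * ((∫ g in (-c)..0, chordDeriv s w g) - ∫ g in 0..c, chordDeriv s w g) := by
  rw [mul_sub, inv_sq_mul_chordKernel_inv s c hw, inv_sq_mul_chordKernel_inv s 0 hw,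
    integral_chordDeriv_right hs hw, integral_chordDeriv_right hs hw]
  have := hs.1.ne'
  simp only [mul_zero, zero_mul, mul_neg, neg_mul, sub_zero, add_zero, ← sub_eq_add_neg]
  field_simp
  ring

lemma integral_chordKernel_sub (hs : s ∈ Ioo (0 : ℝ) 1) (c : ℝ) {δ : ℝ} (hδ : 0 < δ) :
    (∫ t in Ioi δ, chordKernel s c t) - ∫ t in Ioi δ, chordKernel s 0 t =
      2 * s * ∫ g in 0..c,
        ((∫ w in 0..δ⁻¹, chordDeriv s w (-g)) - ∫ w in 0..δ⁻¹, chordDeriv s w g) := by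
  have hW : 0 ≤ δ⁻¹ := (inv_pos.2 hδ).le
  have h_prod (a b : ℝ) := integrable_chordDeriv_prod hs δ⁻¹ a b
  have h_swap (a b : ℝ) : ∫ w in 0..δ⁻¹, ∫ g in a..b, chordDeriv s w g =
      ∫ g in a..b, ∫ w in 0..δ⁻¹, chordDeriv s w g := by
    simp only [intervalIntegral.integral_of_le hW]
    exact (intervalIntegral_integral_swap (f := fun g w => chordDeriv s w g) (h_prod a b).swap).symm
  have h_left (a b : ℝ) :
      IntervalIntegrable (fun w => ∫ g in a..b, chordDeriv s w g) volume 0 δ⁻¹ := by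
    rw [intervalIntegrable_iff_integrableOn_Ioc_of_le hW]
    simp only [intervalIntegral.intervalIntegral_eq_integral_uIoc]
    exact (h_prod a b).integral_prod_left.const_mul _
  have h_right (a b : ℝ) :
      IntervalIntegrable (fun g => ∫ w in 0..δ⁻¹, chordDeriv s w g) volume a b := by
    simp only [intervalIntegral.integral_of_le hW]
    exact intervalIntegrable_iff.2 (h_prod a b).integral_prod_right
  have h_neg : ∫ g in (-c)..0, ∫ w in 0..δ⁻¹, chordDeriv s w g =
      ∫ g in 0..c, ∫ w in 0..δ⁻¹, chordDeriv s w (-g) := by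
    rw [intervalIntegral.integral_comp_neg (fun g => ∫ w in 0..δ⁻¹, chordDeriv s w g), neg_zero]
  calc (∫ t in Ioi δ, chordKernel s c t) - ∫ t in Ioi δ, chordKernel s 0 t
      = ∫ w in 0..δ⁻¹, (w ^ 2)⁻¹ * (chordKernel s c w⁻¹ - chordKernel s 0 w⁻¹) := by
        rw [← integral_sub (integrableOn_chordKernel hs.1 c hδ)
          (integrableOn_chordKernel hs.1 0 hδ), integral_Ioi_eq_integral_inv hδ]
    _ = ∫ w in 0..δ⁻¹, 2 * s *
          ((∫ g in (-c)..0, chordDeriv s w g) - ∫ g in 0..c, chordDeriv s w g) := by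
        simp only [intervalIntegral.integral_of_le hW]
        exact setIntegral_congr_fun measurableSet_Ioc
          fun w hw => inv_sq_mul_chordKernel_inv_sub hs c hw.1
    _ = _ := by
        rw [intervalIntegral.integral_const_mul,
          intervalIntegral.integral_sub (h_left _ _) (h_left _ _), h_swap, h_swap, h_neg,
          intervalIntegral.integral_sub _ (h_right _ _)]
        simpa using (h_right 0 (-c)).comp_mul_left (c := -1)

lemma norm_integral_chordKernel_sub_le (hs : s ∈ Ioo (0 : ℝ) 1) {c C δ : ℝ} (hc : |c| ≤ C)
    (hδ : 0 < δ) (hδC : 2 * C + 1 < δ⁻¹) :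
    ‖(∫ t in Ioi δ, chordKernel s c t) - ∫ t in Ioi δ, chordKernel s 0 t‖ ≤
      2 * s * (2 * C * (δ⁻¹ - 2 * C - 1) ^ (s - 1) * C) := by
  have hC : 0 ≤ C := (abs_nonneg c).trans hc
  have h_pow : 0 ≤ (δ⁻¹ - 2 * C - 1) ^ (s - 1) := Real.rpow_nonneg (by linarith) _
  have h2s : 0 ≤ 2 * s := by linarith [hs.1]
  rw [integral_chordKernel_sub hs c hδ, norm_mul, Real.norm_of_nonneg h2s]
  gcongr
  refine (intervalIntegral.norm_integral_le_of_norm_le_const fun g hg => ?_).trans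
    (mul_le_mul_of_nonneg_left (by rwa [sub_zero]) (by positivity))
  have hgc : |g| ≤ |c| := by simpa using abs_sub_left_of_mem_uIcc (uIoc_subset_uIcc hg)
  rw [norm_sub_rev]
  exact norm_integral_chordDeriv_sub_le hs (hgc.trans hc) hδC

lemma norm_chordKernel_zero_le (hs : s ∈ Ioo (0 : ℝ) 1) {t : ℝ} (ht : t ∈ Ioc (0 : ℝ) 1) :
    ‖chordKernel s 0 t‖ ≤ 2 * t ^ (1 - 2 * s) := by
  have h_base : 0 ≤ 1 - t ^ 2 := by nlinarith [ht.1, ht.2]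
  have h_base' : 1 - t ^ 2 ≤ 1 := by nlinarith
  have h_low : 1 - t ^ 2 ≤ (1 - t ^ 2) ^ s := by
    simpa using Real.rpow_le_rpow_of_exponent_ge' h_base h_base' hs.1.le hs.2.le
  have h_high : (1 - t ^ 2) ^ s ≤ 1 := Real.rpow_le_one h_base h_base' hs.1.le
  have h_rpow : t ^ (1 - 2 * s) = t ^ 2 * t ^ (-1 - 2 * s) := by
    rw [← Real.rpow_natCast, ← Real.rpow_add ht.1]
    ring_nf
  have h_pos : 0 ≤ t ^ (-1 - 2 * s) := Real.rpow_nonneg ht.1.le _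
  have h_eq : chordKernel s 0 t = 2 * (1 - (1 - t ^ 2) ^ s) * t ^ (-1 - 2 * s) := by
    simp only [chordKernel, mul_zero, zero_mul, sub_zero, add_zero, truncPow_of_nonneg h_base]
    ring
  rw [h_eq, h_rpow, Real.norm_of_nonneg (mul_nonneg (by linarith) h_pos), ← mul_assoc]
  gcongr
  linarith

lemma integrableOn_chordKernel_zero (hs : s ∈ Ioo (0 : ℝ) 1) :
    IntegrableOn (chordKernel s 0) (Ioi 0) := by
  rw [← Ioc_union_Ioi_eq_Ioi zero_le_one]
  refine IntegrableOn.union ?_ (integrableOn_chordKernel hs.1 0 one_pos)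
  have h_rpow := (intervalIntegrable_iff_integrableOn_Ioc_of_le zero_le_one).1
    (intervalIntegral.intervalIntegrable_rpow' (r := 1 - 2 * s) (by linarith [hs.2]))
  exact (h_rpow.const_mul 2).mono'
    ((measurable_chordKernel s).comp measurable_prodMk_left).aestronglyMeasurable
    ((ae_restrict_mem measurableSet_Ioc).mono fun t ht => norm_chordKernel_zero_le hs ht)

lemma tendsto_integral_chordKernel_zero (hs : s ∈ Ioo (0 : ℝ) 1) :
    Tendsto (fun δ => ∫ t in Ioi δ, chordKernel s 0 t) (𝓝[>] 0)
      (𝓝 (∫ t in Ioi 0, chordKernel s 0 t)) := by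
  have h := (aecover_Ioi_of_Ioi (μ := volume) (A := (0 : ℝ)) (a := id)
    (l := 𝓝[>] 0) (tendsto_id.mono_left nhdsWithin_le_nhds)).integral_tendsto_of_countably_generated
    (integrableOn_chordKernel_zero hs)
  refine h.congr' ?_
  filter_upwards [self_mem_nhdsWithin] with δ hδ
  rw [Measure.restrict_restrict measurableSet_Ioi, id, Ioi_inter_Ioi, sup_of_le_left (le_of_lt hδ)]

/-- The limit does not depend on the position `c` of the midpoint on the chord: this is why the
fractional Laplacian of `(1 - |x|²)₊ ^ s` is constant in the unit ball. -/
lemma tendstoUniformlyOn_integral_chordKernel (hs : s ∈ Ioo (0 : ℝ) 1) (C : ℝ) :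
    TendstoUniformlyOn (fun δ c => ∫ t in Ioi δ, chordKernel s c t)
      (fun _ => ∫ t in Ioi 0, chordKernel s 0 t) (𝓝[>] 0) {c | |c| ≤ C} := by
  have h_inv : Tendsto (fun δ : ℝ => δ⁻¹) (𝓝[>] 0) atTop := tendsto_inv_nhdsGT_zero
  have h_rpow : Tendsto (fun δ : ℝ => 2 * s * (2 * C * (δ⁻¹ - 2 * C - 1) ^ (s - 1) * C))
      (𝓝[>] 0) (𝓝 0) := by
    have h := (tendsto_rpow_neg_atTop (y := 1 - s) (by linarith [hs.2])).comp
      (tendsto_atTop_add_const_right _ (-(2 * C) - 1) h_inv)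
    simpa [Function.comp_def, add_sub_assoc, sub_eq_add_neg, add_assoc] using
      ((h.const_mul (2 * C)).mul_const C).const_mul (2 * s)
  rw [Metric.tendstoUniformlyOn_iff]
  intro ε hε
  filter_upwards [h_rpow.eventually (gt_mem_nhds (half_pos hε)), self_mem_nhdsWithin,
    h_inv.eventually (eventually_gt_atTop (2 * C + 1)),
    (tendsto_integral_chordKernel_zero hs).eventually (ball_mem_nhds _ (half_pos hε))]
    with δ h_small hδ hδC h_zero c hc
  rw [dist_comm]
  calc dist (∫ t in Ioi δ, chordKernel s c t) (∫ t in Ioi 0, chordKernel s 0 t)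
      ≤ dist (∫ t in Ioi δ, chordKernel s c t) (∫ t in Ioi δ, chordKernel s 0 t)
        + dist (∫ t in Ioi δ, chordKernel s 0 t) (∫ t in Ioi 0, chordKernel s 0 t) :=
        dist_triangle _ _ _
    _ < ε / 2 + ε / 2 := by
        refine add_lt_add ?_ h_zero
        exact (norm_integral_chordKernel_sub_le hs hc hδ hδC).trans_lt h_small
    _ = ε := add_halves ε

end Chord

/-! ### The fractional Laplacian -/

section Polar

variable {E F : Type*} [NormedAddCommGroup E] [NormedSpace ℝ E] [MeasurableSpace E] [BorelSpace E]
  [FiniteDimensional ℝ E] [NormedAddCommGroup F] [NormedSpace ℝ F]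

lemma integral_volumeIoiPow (n : ℕ) (g : ℝ → F) :
    ∫ r : Ioi (0 : ℝ), g r ∂Measure.volumeIoiPow n = ∫ r in Ioi (0 : ℝ), r ^ n • g r := by
  rw [Measure.volumeIoiPow]
  simp only [ENNReal.ofReal]
  rw [integral_withDensity_eq_integral_smul (by fun_prop),
    integral_subtype_comap measurableSet_Ioi fun r : ℝ => Real.toNNReal (r ^ n) • g r]
  refine setIntegral_congr_fun measurableSet_Ioi fun r hr => ?_
  simp only [NNReal.smul_def, Real.coe_toNNReal _ (pow_nonneg (le_of_lt hr) n)]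

lemma integral_polar [Nontrivial E] (μ : Measure E) [μ.IsAddHaarMeasure] {f : E → F}
    (hf : Integrable f μ) :
    ∫ x, f x ∂μ = ∫ ω : sphere (0 : E) 1, (∫ r in Ioi (0 : ℝ),
      r ^ (Module.finrank ℝ E - 1) • f (r • (ω : E))) ∂μ.toSphere := by
  have h_compl : MeasurableSet ({0}ᶜ : Set E) := (measurableSet_singleton 0).compl
  have h_emb := (homeomorphUnitSphereProd E).measurableEmbedding
  have h_pres := μ.measurePreserving_homeomorphUnitSphereProd
  let g : sphere (0 : E) 1 × Ioi (0 : ℝ) → F := fun q => f ((q.2 : ℝ) • (q.1 : E))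
  have hg : g ∘ homeomorphUnitSphereProd E = f ∘ Subtype.val := by
    funext x
    simp [g, smul_smul, mul_inv_cancel₀ (norm_ne_zero_iff.2 x.2)]
  have h_int : Integrable g (μ.toSphere.prod (.volumeIoiPow (Module.finrank ℝ E - 1))) := by
    rw [← h_pres.integrable_comp_emb h_emb, hg]
    exact (integrableOn_iff_comap_subtypeVal h_compl).1 hf.integrableOn
  calc ∫ x, f x ∂μ = ∫ x : ({0}ᶜ : Set E), (g ∘ homeomorphUnitSphereProd E) x ∂μ.comap (↑) := by
        rw [hg]
        exact ((integral_subtype_comap h_compl f).trans (by rw [restrict_compl_singleton])).symm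
    _ = _ := by
        simp only [Function.comp_apply]
        rw [h_pres.integral_comp h_emb g, integral_prod g h_int]
        exact integral_congr_ae (.of_forall fun ω =>
          integral_volumeIoiPow _ fun r => f (r • (ω : E)))

end Polar

lemma measurableSet_lt_norm_sub {E : Type*} [NormedAddCommGroup E] [MeasurableSpace E]
    [BorelSpace E] (x : E) (δ : ℝ) : MeasurableSet {y : E | δ < ‖y - x‖} :=
  measurableSet_lt measurable_const (Continuous.measurable (by fun_prop))

section FracLaplacian

variable {E : Type*} [NormedAddCommGroup E] [InnerProductSpace ℝ E] [FiniteDimensional ℝ E]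
  [MeasurableSpace E] [BorelSpace E] {s : ℝ} {u v : E → ℝ} {x : E}

/-- The integrand of the fractional Laplacian of order `2s` of `u` at `x`. -/
noncomputable def fracKernel (s : ℝ) (u : E → ℝ) (x y : E) : ℝ :=
  (u x - u y) / ‖x - y‖ ^ ((Module.finrank ℝ E : ℝ) + 2 * s)

/-- `L` is the value at `x` of the fractional Laplacian of order `2s` of `u`, without normalising
constant. The truncated integrals are required to converge absolutely, so that none of them takes
the junk value `0`. -/
structure HasFracLaplacianAt (s : ℝ) (u : E → ℝ) (L : ℝ) (x : E) : Prop where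
  integrableOn : ∀ δ > 0, IntegrableOn (fracKernel s u x) {y | δ < ‖y - x‖}
  tendsto : Tendsto (fun δ => ∫ y in {y | δ < ‖y - x‖}, fracKernel s u x y) (𝓝[>] 0) (𝓝 L)

namespace HasFracLaplacianAt

variable {L M : ℝ}

lemma zero (s : ℝ) (x : E) : HasFracLaplacianAt s 0 0 x := by
  have h_kernel : fracKernel s (0 : E → ℝ) x = 0 := by ext y; simp [fracKernel]
  exact ⟨fun δ _ => by rw [h_kernel]; exact integrableOn_zero, by simp [h_kernel]⟩

lemma add (hu : HasFracLaplacianAt s u L x) (hv : HasFracLaplacianAt s v M x) :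
    HasFracLaplacianAt s (u + v) (L + M) x := by
  have h_kernel : fracKernel s (u + v) x = fracKernel s u x + fracKernel s v x := by
    ext y; simp only [fracKernel, Pi.add_apply]; ring
  refine ⟨fun δ hδ => h_kernel ▸ (hu.integrableOn δ hδ).add (hv.integrableOn δ hδ), ?_⟩
  refine (hu.tendsto.add hv.tendsto).congr' ?_
  filter_upwards [self_mem_nhdsWithin] with δ hδ
  rw [← integral_add (hu.integrableOn δ hδ) (hv.integrableOn δ hδ), h_kernel]
  rfl

lemma const_smul (c : ℝ) (hu : HasFracLaplacianAt s u L x) :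
    HasFracLaplacianAt s (c • u) (c * L) x := by
  have h_kernel : fracKernel s (c • u) x = c • fracKernel s u x := by
    ext y; simp only [fracKernel, Pi.smul_apply, smul_eq_mul]; ring
  refine ⟨fun δ hδ => h_kernel ▸ (hu.integrableOn δ hδ).smul c, ?_⟩
  refine (hu.tendsto.const_mul c).congr fun δ => ?_
  rw [← integral_const_mul, h_kernel]
  rfl

lemma sub (hu : HasFracLaplacianAt s u L x) (hv : HasFracLaplacianAt s v M x) :
    HasFracLaplacianAt s (u - v) (L - M) x := by
  simpa [sub_eq_add_neg] using hu.add (hv.const_smul (-1))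

end HasFracLaplacianAt

lemma integrableOn_fracKernel (hs : 0 < s) (hu : Measurable u) {M : ℝ} (hM : ∀ y, |u y| ≤ M) (x : E)
    {δ : ℝ} (hδ : 0 < δ) : IntegrableOn (fracKernel s u x) {y | δ < ‖y - x‖} := by
  set d : ℝ := (Module.finrank ℝ E : ℝ) + 2 * s with hd
  have : 0 < d := by positivity
  have h_dom : Integrable fun y : E => 2 * M * (1 + δ⁻¹) ^ d * (1 + ‖y - x‖) ^ (-d) :=
    ((integrable_one_add_norm (by linarith)).comp_sub_right x).const_mul _
  refine h_dom.integrableOn.mono' (Measurable.aestronglyMeasurable (by unfold fracKernel; fun_prop))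
    ((ae_restrict_mem (measurableSet_lt_norm_sub x δ)).mono fun y hy => ?_)
  have hy_pos : 0 < ‖y - x‖ := hδ.trans hy
  have h_base : (1 + ‖y - x‖) / (1 + δ⁻¹) ≤ ‖y - x‖ := by
    have : 1 ≤ ‖y - x‖ * δ⁻¹ := by
      rw [← div_eq_mul_inv, one_le_div hδ]
      exact le_of_lt hy
    rw [div_le_iff₀ (by positivity)]
    linarith
  have h_num : |u x - u y| ≤ 2 * M := (abs_sub _ _).trans (by linarith [hM x, hM y])
  have hM_nonneg : 0 ≤ M := (abs_nonneg _).trans (hM x)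
  rw [fracKernel, norm_div, norm_sub_rev x y,
    Real.norm_of_nonneg (Real.rpow_nonneg (norm_nonneg (y - x)) _), Real.norm_eq_abs, ← hd]
  calc |u x - u y| / ‖y - x‖ ^ d ≤ 2 * M / ((1 + ‖y - x‖) / (1 + δ⁻¹)) ^ d := by gcongr
    _ = 2 * M * (1 + δ⁻¹) ^ d * (1 + ‖y - x‖) ^ (-d) := by
        rw [Real.div_rpow (by positivity) (by positivity), Real.rpow_neg (by positivity)]
        field_simp

lemma setIntegral_fracKernel_eq_polar [Nontrivial E] {δ : ℝ} (hδ : 0 < δ)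
    (h_int : IntegrableOn (fracKernel s u x) {y | δ < ‖y - x‖}) :
    ∫ y in {y | δ < ‖y - x‖}, fracKernel s u x y = 2⁻¹ * ∫ ω : sphere (0 : E) 1,
      (∫ r in Ioi δ, (2 * u x - u (x + r • (ω : E)) - u (x - r • (ω : E))) * r ^ (-1 - 2 * s))
        ∂(volume : Measure E).toSphere := by
  set F : E → ℝ := fun z => {y | δ < ‖y - x‖}.indicator (fracKernel s u x) (x + z) with hF
  have h_meas := measurableSet_lt_norm_sub x δ
  have hF_int : Integrable F := (h_int.integrable_indicator h_meas).comp_add_left x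
  have h_symm : ∫ y in {y | δ < ‖y - x‖}, fracKernel s u x y = 2⁻¹ * ∫ z, (F z + F (-z)) := by
    rw [integral_add hF_int hF_int.comp_neg, integral_neg_eq_self F, hF,
      integral_add_left_eq_self, integral_indicator h_meas]
    ring
  rw [h_symm, integral_polar _ (f := fun z => F z + F (-z)) (hF_int.add hF_int.comp_neg)]
  refine congrArg _ (integral_congr_ae (.of_forall fun ω => ?_))
  have h_radial : ∀ r ∈ Ioi (0 : ℝ),
      r ^ (Module.finrank ℝ E - 1) • (F (r • (ω : E)) + F (-(r • (ω : E)))) = (Ioi δ).indicator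
        (fun r => (2 * u x - u (x + r • (ω : E)) - u (x - r • (ω : E))) * r ^ (-1 - 2 * s)) r := by
    intro r hr
    have h_norm : ‖r • (ω : E)‖ = r := by
      rw [norm_smul, norm_eq_of_mem_sphere, mul_one, Real.norm_of_nonneg (le_of_lt hr)]
    have h_pow : r ^ (-1 - 2 * s) = r ^ (Module.finrank ℝ E - 1) /
        r ^ ((Module.finrank ℝ E : ℝ) + 2 * s) := by
      rw [← Real.rpow_natCast, ← Real.rpow_sub hr, Nat.cast_sub Module.finrank_pos]
      congr 1
      push_cast
      ring
    by_cases hδr : δ < r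
    · simp only [hF, indicator, mem_ofPred_eq, mem_Ioi, fracKernel, add_sub_cancel_left,
        sub_add_cancel_left, norm_neg, h_norm, hδr, if_true, h_pow, smul_eq_mul,
        ← sub_eq_add_neg]
      ring
    · simp only [hF, indicator, mem_ofPred_eq, mem_Ioi, add_sub_cancel_left, norm_neg, h_norm, hδr,
        if_false, add_zero, smul_zero]
  exact (setIntegral_congr_fun measurableSet_Ioi h_radial).trans (by
    rw [setIntegral_indicator measurableSet_Ioi, Ioi_inter_Ioi, sup_of_le_right hδ.le])

end FracLaplacian

/-! ### The Getoor formula -/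

section Getoor

variable {E : Type*} [NormedAddCommGroup E] {s : ℝ}

/-- The Getoor function `(m - ‖x - p‖²)₊ ^ s` of the ball with centre `p` and squared radius `m`. -/
noncomputable def getoor (s : ℝ) (p : E) (m : ℝ) (x : E) : ℝ := truncPow s (m - ‖x - p‖ ^ 2)

lemma continuous_getoor (hs : 0 ≤ s) (p : E) (m : ℝ) : Continuous (getoor s p m) :=
  (continuous_truncPow hs).comp (by fun_prop)

lemma getoor_eq_zero (hs : s ≠ 0) {p x : E} {m : ℝ} (hx : m ≤ ‖x - p‖ ^ 2) : getoor s p m x = 0 :=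
  truncPow_of_nonpos hs (sub_nonpos.2 hx)

lemma hasCompactSupport_getoor [ProperSpace E] (hs : s ≠ 0) (p : E) (m : ℝ) :
    HasCompactSupport (getoor s p m) := by
  refine .of_support_subset_isCompact (isCompact_closedBall p √m) fun x hx => ?_
  by_contra hx_far
  rw [mem_closedBall, dist_eq_norm, not_le] at hx_far
  exact hx (getoor_eq_zero hs (Real.lt_sq_of_sqrt_lt hx_far).le)

lemma abs_getoor_le (hs : 0 ≤ s) (p : E) (m : ℝ) (x : E) : |getoor s p m x| ≤ truncPow s m := by
  rw [getoor, abs_of_nonneg (truncPow_nonneg _ _)]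
  exact truncPow_le_truncPow hs (sub_le_self m (sq_nonneg _))

lemma memHolder_getoor (hs : s ∈ Ioo (0 : ℝ) 1) (p : E) {m : ℝ} (hm : 0 ≤ m) :
    MemHolder s.toNNReal (getoor s p m) := by
  have h_lip : LipschitzWith (2 * √m).toNNReal fun x : E => m - min ‖x - p‖ √m ^ 2 := by
    refine .of_dist_le_mul fun x y => ?_
    set a := min ‖x - p‖ √m
    set b := min ‖y - p‖ √m
    have ha : 0 ≤ a := le_min (norm_nonneg _) (Real.sqrt_nonneg _)
    have hb : 0 ≤ b := le_min (norm_nonneg _) (Real.sqrt_nonneg _)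
    have h_sum : |b + a| ≤ 2 * √m := by
      rw [abs_of_nonneg (add_nonneg hb ha)]
      linarith [min_le_right ‖x - p‖ √m, min_le_right ‖y - p‖ √m]
    have h_sub : |b - a| ≤ dist x y := by
      refine (abs_min_sub_min_le_max _ _ _ _).trans (max_le ?_ (by simp))
      rw [dist_comm, dist_eq_norm]
      simpa using abs_norm_sub_norm_le (y - p) (x - p)
    rw [Real.coe_toNNReal _ (by positivity), Real.dist_eq, sub_sub_sub_cancel_left, sq_sub_sq,
      abs_mul]
    exact mul_le_mul h_sum h_sub (abs_nonneg _) (by positivity)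
  have h_eq : getoor s p m = truncPow s ∘ fun x => m - min ‖x - p‖ √m ^ 2 := by
    ext x
    rcases le_total ‖x - p‖ √m with hx | hx
    · rw [Function.comp_apply, min_eq_left hx, getoor]
    · rw [Function.comp_apply, min_eq_right hx, Real.sq_sqrt hm, sub_self,
        truncPow_of_nonpos hs.1.ne' le_rfl,
        getoor_eq_zero hs.1.ne' ((Real.sqrt_le_left (norm_nonneg _)).1 hx)]
  rw [h_eq]
  simpa only [mul_one] using ((holderWith_truncPow ⟨hs.1.le, hs.2.le⟩).comp
    (holderWith_one.2 h_lip)).memHolder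

variable [InnerProductSpace ℝ E] {p x : E} {m : ℝ}

lemma contDiffAt_getoor (hx : ‖x - p‖ ^ 2 < m) {n : WithTop ℕ∞} :
    ContDiffAt ℝ n (getoor s p m) x :=
  (contDiffAt_truncPow s (sub_pos.2 hx)).comp x
    (contDiffAt_const.sub ((contDiffAt_id.sub contDiffAt_const).norm_sq ℝ))

lemma getoor_add_smul (hx : ‖x - p‖ ^ 2 < m) {ω : E} (hω : ‖ω‖ = 1) (t : ℝ) :
    getoor s p m (x + (√(m - ‖x - p‖ ^ 2) * t) • ω) = (m - ‖x - p‖ ^ 2) ^ s *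
      truncPow s (1 - 2 * (inner ℝ (x - p) ω / √(m - ‖x - p‖ ^ 2)) * t - t ^ 2) := by
  have hR_pos : 0 < √(m - ‖x - p‖ ^ 2) := Real.sqrt_pos.2 (sub_pos.2 hx)
  have hR_sq : √(m - ‖x - p‖ ^ 2) ^ 2 = m - ‖x - p‖ ^ 2 := Real.sq_sqrt (sub_pos.2 hx).le
  rw [← truncPow_mul s (sub_pos.2 hx).le, getoor, add_sub_right_comm, norm_add_sq_real, norm_smul,
    real_inner_smul_right, hω, mul_one, Real.norm_eq_abs, sq_abs]
  set R := √(m - ‖x - p‖ ^ 2)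
  have h_inner : R * (inner ℝ (x - p) ω / R) = inner ℝ (x - p) ω := mul_div_cancel₀ _ hR_pos.ne'
  congr 1
  linear_combination (-2 * (inner ℝ (x - p) ω / R) * t - t ^ 2) * hR_sq + 2 * R * t * h_inner

lemma integral_Ioi_second_difference_getoor (hx : ‖x - p‖ ^ 2 < m) {ω : E} (hω : ‖ω‖ = 1)
    {δ : ℝ} (hδ : 0 < δ) :
    ∫ r in Ioi δ, (2 * getoor s p m x - getoor s p m (x + r • ω) - getoor s p m (x - r • ω)) *
        r ^ (-1 - 2 * s) =
      ∫ t in Ioi (δ / √(m - ‖x - p‖ ^ 2)),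
        chordKernel s (inner ℝ (x - p) ω / √(m - ‖x - p‖ ^ 2)) t := by
  have h_pos := sub_pos.2 hx
  have h_add := getoor_add_smul (s := s) hx hω
  set R := √(m - ‖x - p‖ ^ 2) with hR
  have hR_pos : 0 < R := Real.sqrt_pos.2 h_pos
  have h_pow : (m - ‖x - p‖ ^ 2) ^ s = R ^ (2 * s) := by
    rw [hR, Real.sqrt_eq_rpow, ← Real.rpow_mul h_pos.le]
    ring_nf
  have h_cancel : R * (R ^ (2 * s) * R ^ (-1 - 2 * s)) = 1 := by
    rw [← Real.rpow_add hR_pos, show 2 * s + (-1 - 2 * s) = -1 by ring, Real.rpow_neg_one,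
      mul_inv_cancel₀ hR_pos.ne']
  have h_scale := integral_comp_mul_left_Ioi' (fun r => (2 * getoor s p m x -
    getoor s p m (x + r • ω) - getoor s p m (x - r • ω)) * r ^ (-1 - 2 * s)) (δ / R) hR_pos
  rw [mul_div_cancel₀ _ hR_pos.ne'] at h_scale
  rw [← h_scale, smul_eq_mul, ← integral_const_mul]
  refine setIntegral_congr_fun measurableSet_Ioi fun t ht => ?_
  have ht_pos : 0 < t := (div_pos hδ hR_pos).trans ht
  have h_sub := h_add (-t)
  rw [mul_neg, neg_smul, ← sub_eq_add_neg, mul_neg, sub_neg_eq_add, neg_sq] at h_sub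
  have h_centre : getoor s p m x = (m - ‖x - p‖ ^ 2) ^ s := truncPow_of_nonneg h_pos.le
  simp only [h_add, h_sub, h_centre, h_pow, chordKernel, Real.mul_rpow hR_pos.le ht_pos.le]
  linear_combination ((2 - truncPow s (1 - 2 * (inner ℝ (x - p) ω / R) * t - t ^ 2) -
    truncPow s (1 + 2 * (inner ℝ (x - p) ω / R) * t - t ^ 2)) * t ^ (-1 - 2 * s)) * h_cancel

variable [MeasurableSpace E] [BorelSpace E]

lemma measurable_integral_chordKernel_inner (s : ℝ) (v : E) (δ : ℝ) :
    Measurable fun ω : sphere (0 : E) 1 => ∫ t in Ioi δ, chordKernel s (inner ℝ v (ω : E)) t := by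
  have h_int : Measurable fun c : ℝ => ∫ t in Ioi δ, chordKernel s c t :=
    (measurable_chordKernel s).stronglyMeasurable.integral_prod_right.measurable
  have h_inner : Measurable fun ω : sphere (0 : E) 1 => inner ℝ v (ω : E) :=
    Continuous.measurable (by fun_prop)
  exact h_int.comp h_inner

variable [FiniteDimensional ℝ E]

lemma tendsto_integral_sphere_chordKernel (hs : s ∈ Ioo (0 : ℝ) 1) (v : E) :
    Tendsto (fun δ => ∫ ω : sphere (0 : E) 1,
        (∫ t in Ioi δ, chordKernel s (inner ℝ v (ω : E)) t) ∂(volume : Measure E).toSphere)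
      (𝓝[>] 0) (𝓝 (∫ _ : sphere (0 : E) 1,
        (∫ t in Ioi 0, chordKernel s 0 t) ∂(volume : Measure E).toSphere)) := by
  have h_unif := tendstoUniformlyOn_integral_chordKernel hs ‖v‖
  have h_mem (ω : sphere (0 : E) 1) : inner ℝ v (ω : E) ∈ {c : ℝ | |c| ≤ ‖v‖} := by
    simpa using abs_real_inner_le_norm v (ω : E)
  refine tendsto_integral_filter_of_norm_le_const
    (.of_forall fun δ => (measurable_integral_chordKernel_inner s v δ).aestronglyMeasurable)
    ⟨‖∫ t in Ioi 0, chordKernel s 0 t‖ + 1, ?_⟩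
    (.of_forall fun ω => h_unif.tendsto_at (h_mem ω))
  filter_upwards [Metric.tendstoUniformlyOn_iff.1 h_unif 1 one_pos] with δ hδ
  refine .of_forall fun ω => ?_
  have h_dist := hδ _ (h_mem ω)
  rw [dist_comm, dist_eq_norm] at h_dist
  linarith [norm_le_norm_add_norm_sub' (∫ t in Ioi δ, chordKernel s (inner ℝ v (ω : E)) t)
    (∫ t in Ioi 0, chordKernel s 0 t)]

variable (E) in
theorem exists_hasFracLaplacianAt_getoor [Nontrivial E] (hs : s ∈ Ioo (0 : ℝ) 1) :
    ∃ L, ∀ (p : E) (m : ℝ) (x : E), ‖x - p‖ ^ 2 < m →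
      HasFracLaplacianAt s (getoor s p m) L x := by
  refine ⟨2⁻¹ * ∫ _ : sphere (0 : E) 1, (∫ t in Ioi 0, chordKernel s 0 t)
    ∂(volume : Measure E).toSphere, fun p m x hx => ?_⟩
  have h_int (δ : ℝ) (hδ : 0 < δ) : IntegrableOn (fracKernel s (getoor s p m) x)
      {y | δ < ‖y - x‖} :=
    integrableOn_fracKernel hs.1 (continuous_getoor hs.1.le p m).measurable
      (abs_getoor_le hs.1.le p m) x hδ
  refine ⟨h_int, ?_⟩
  set R := √(m - ‖x - p‖ ^ 2)
  have hR_pos : 0 < R := Real.sqrt_pos.2 (sub_pos.2 hx)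
  have h_div : Tendsto (fun δ : ℝ => δ / R) (𝓝[>] 0) (𝓝[>] 0) := by
    refine tendsto_nhdsWithin_iff.2 ⟨?_, ?_⟩
    · exact tendsto_nhdsWithin_of_tendsto_nhds (Continuous.tendsto' (by fun_prop) _ _ (zero_div R))
    · filter_upwards [self_mem_nhdsWithin] with δ hδ using div_pos hδ hR_pos
  refine (((tendsto_integral_sphere_chordKernel hs (R⁻¹ • (x - p))).comp h_div).const_mul
    2⁻¹).congr' ?_
  filter_upwards [self_mem_nhdsWithin] with δ hδ
  rw [setIntegral_fracKernel_eq_polar hδ (h_int δ hδ)]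
  simp only [Function.comp_apply, integral_Ioi_second_difference_getoor hx
    (norm_eq_of_mem_sphere _) hδ, real_inner_smul_left, inv_mul_eq_div, R]

end Getoor

/-! ### Closures in the `C^k` topology -/

section ContDiffClosure

variable {E F : Type*} [NormedAddCommGroup E] [NormedSpace ℝ E] [NormedAddCommGroup F]
  [NormedSpace ℝ F] {k : ℕ} {K : Set E} {W : Submodule ℝ (E → F)} {f g : E → F}

/-- The functions that are `C^k` at the points of `K` and whose derivatives of order at most `k`
can be approximated, uniformly on `K`, by those of members of `W`. -/
def contDiffClosure (k : ℕ) (K : Set E) (W : Submodule ℝ (E → F)) : Submodule ℝ (E → F) where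
  carrier := {g | (∀ x ∈ K, ContDiffAt ℝ k g x) ∧ ∀ ε > 0, ∃ u ∈ W, (∀ x ∈ K, ContDiffAt ℝ k u x) ∧
    ∀ j ≤ k, ∀ x ∈ K, ‖iteratedFDeriv ℝ j u x - iteratedFDeriv ℝ j g x‖ < ε}
  zero_mem' := ⟨fun _ _ => contDiffAt_const, fun ε hε =>
    ⟨0, W.zero_mem, fun _ _ => contDiffAt_const, fun j _ x _ => by simpa using hε⟩⟩
  add_mem' := by
    rintro f g ⟨hf, hf_approx⟩ ⟨hg, hg_approx⟩
    refine ⟨fun x hx => (hf x hx).add (hg x hx), fun ε hε => ?_⟩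
    obtain ⟨u, huW, hu, hu_lt⟩ := hf_approx (ε / 2) (half_pos hε)
    obtain ⟨v, hvW, hv, hv_lt⟩ := hg_approx (ε / 2) (half_pos hε)
    refine ⟨u + v, W.add_mem huW hvW, fun x hx => (hu x hx).add (hv x hx), fun j hj x hx => ?_⟩
    have hjk : (j : WithTop ℕ∞) ≤ k := mod_cast hj
    rw [iteratedFDeriv_add_apply ((hu x hx).of_le hjk) ((hv x hx).of_le hjk),
      iteratedFDeriv_add_apply ((hf x hx).of_le hjk) ((hg x hx).of_le hjk), add_sub_add_comm]
    exact (norm_add_le _ _).trans_lt (by linarith [hu_lt j hj x hx, hv_lt j hj x hx])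
  smul_mem' := by
    rintro c g ⟨hg, hg_approx⟩
    refine ⟨fun x hx => contDiffAt_const.smul (hg x hx), fun ε hε => ?_⟩
    obtain ⟨u, huW, hu, hu_lt⟩ := hg_approx (ε / (‖c‖ + 1)) (by positivity)
    refine ⟨c • u, W.smul_mem c huW, fun x hx => contDiffAt_const.smul (hu x hx),
      fun j hj x hx => ?_⟩
    have hjk : (j : WithTop ℕ∞) ≤ k := mod_cast hj
    rw [iteratedFDeriv_const_smul_apply ((hu x hx).of_le hjk),
      iteratedFDeriv_const_smul_apply ((hg x hx).of_le hjk), ← smul_sub, norm_smul]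
    have h_lt := hu_lt j hj x hx
    rw [lt_div_iff₀ (by positivity)] at h_lt
    linarith [norm_nonneg (iteratedFDeriv ℝ j u x - iteratedFDeriv ℝ j g x)]

lemma mem_contDiffClosure_of_mem (hgW : g ∈ W) (hg : ∀ x ∈ K, ContDiffAt ℝ k g x) :
    g ∈ contDiffClosure k K W :=
  ⟨hg, fun ε hε => ⟨g, hgW, hg, fun j _ x _ => by simpa using hε⟩⟩

lemma mem_contDiffClosure_congr (hf : f ∈ contDiffClosure k K W) (hfg : ∀ x ∈ K, f =ᶠ[𝓝 x] g) :
    g ∈ contDiffClosure k K W := by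
  refine ⟨fun x hx => (hf.1 x hx).congr_of_eventuallyEq (hfg x hx).symm, fun ε hε => ?_⟩
  obtain ⟨u, huW, hu, hu_lt⟩ := hf.2 ε hε
  refine ⟨u, huW, hu, fun j hj x hx => ?_⟩
  rw [← ((hfg x hx).iteratedFDeriv ℝ j).eq_of_nhds]
  exact hu_lt j hj x hx

lemma mem_contDiffClosure_of_approx (hg : ∀ x ∈ K, ContDiffAt ℝ k g x)
    (h : ∀ ε > 0, ∃ f ∈ contDiffClosure k K W,
      ∀ j ≤ k, ∀ x ∈ K, ‖iteratedFDeriv ℝ j f x - iteratedFDeriv ℝ j g x‖ < ε) :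
    g ∈ contDiffClosure k K W := by
  refine ⟨hg, fun ε hε => ?_⟩
  obtain ⟨f, hf, hf_lt⟩ := h (ε / 2) (half_pos hε)
  obtain ⟨u, huW, hu, hu_lt⟩ := hf.2 (ε / 2) (half_pos hε)
  refine ⟨u, huW, hu, fun j hj x hx => ?_⟩
  linarith [hf_lt j hj x hx, hu_lt j hj x hx, norm_sub_le_norm_sub_add_norm_sub
    (iteratedFDeriv ℝ j u x) (iteratedFDeriv ℝ j f x) (iteratedFDeriv ℝ j g x)]

lemma contDiffAt_uncurry_iteratedFDeriv {P : Type*} [NormedAddCommGroup P] [NormedSpace ℝ P]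
    {H : P → E → F} {a : P × E} (hH : ContDiffAt ℝ (⊤ : ℕ∞) (Function.uncurry H) a) (j : ℕ) :
    ContDiffAt ℝ (⊤ : ℕ∞) (fun q : P × E => iteratedFDeriv ℝ j (H q.1) q.2) a := by
  induction j with
  | zero =>
    exact (continuousMultilinearCurryFin0 ℝ E F).symm.contDiff.contDiffAt.comp a hH
  | succ j ih =>
    have h_fderiv := ContDiffAt.fderiv (m := (⊤ : ℕ∞)) (x₀ := a)
      (f := fun q : P × E => iteratedFDeriv ℝ j (H q.1)) (g := Prod.snd)
      (ih.comp (a, a.2) (contDiffAt_fst.fst.prodMk contDiffAt_snd)) contDiffAt_snd le_rfl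
    exact (continuousMultilinearCurryLeftEquiv ℝ (fun _ : Fin (j + 1) => E) F).symm.contDiff
      |>.contDiffAt.comp a h_fderiv

lemma mem_contDiffClosure_of_eventually (hK : IsCompact K) {H : ℝ → E → F}
    (hH : ∀ x ∈ K, ContDiffAt ℝ (⊤ : ℕ∞) (Function.uncurry H) (0, x))
    (h_mem : ∀ᶠ t in 𝓝[>] 0, H t ∈ contDiffClosure k K W) : H 0 ∈ contDiffClosure k K W := by
  have h_smooth (x : E) (hx : x ∈ K) : ContDiffAt ℝ k (H 0) x :=
    ((hH x hx).of_le (mod_cast le_top)).comp (f := fun y => (0, y)) x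
      (contDiffAt_const.prodMk contDiffAt_id)
  refine mem_contDiffClosure_of_approx h_smooth fun ε hε => ?_
  have h_near : ∀ j ≤ k, ∀ᶠ t in 𝓝 0, ∀ x ∈ K,
      ‖iteratedFDeriv ℝ j (H t) x - iteratedFDeriv ℝ j (H 0) x‖ < ε := by
    refine fun j _ => hK.eventually_forall_of_forall_eventually fun x hx => ?_
    have h_cont := (contDiffAt_uncurry_iteratedFDeriv (hH x hx) j).continuousAt
    have h_cont_zero : ContinuousAt (fun q : ℝ × E => iteratedFDeriv ℝ j (H 0) q.2) (0, x) :=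
      h_cont.comp (x := (0, x)) (f := fun q : ℝ × E => ((0 : ℝ), q.2)) (by fun_prop)
    have h_sub := (h_cont.sub h_cont_zero).norm
    exact h_sub.eventually_lt_const (by simpa using hε)
  have h_all := (eventually_all_finite (finite_le_nat k)).2 h_near
  obtain ⟨t, ht_mem, ht_near⟩ := (h_mem.and (h_all.filter_mono nhdsWithin_le_nhds)).exists
  exact ⟨H t, ht_mem, ht_near⟩

end ContDiffClosure

section Powers

variable {E : Type*} [NormedAddCommGroup E] [NormedSpace ℝ E] {k : ℕ} {K : Set E}
  {W : Submodule ℝ (E → ℝ)} {q : E → ℝ} {ψ : ℝ → ℝ}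

lemma pow_mul_mem_contDiffClosure (hK : IsCompact K)
    (hq : ∀ x ∈ K, ContDiffAt ℝ (⊤ : ℕ∞) q x) (hψ : AnalyticAt ℝ ψ 0) {j : ℕ}
    (h_mem : ∀ᶠ t in 𝓝[>] 0, (fun x => q x ^ j * ψ (t * q x)) ∈ contDiffClosure k K W) :
    (fun x => q x ^ j * ψ 0) ∈ contDiffClosure k K W := by
  have h_limit := mem_contDiffClosure_of_eventually hK
    (H := fun t x => q x ^ j * ψ (t * q x)) (fun x hx => ?_) h_mem
  · simpa only [zero_mul] using h_limit
  have hq_snd : ContDiffAt ℝ (⊤ : ℕ∞) (fun p : ℝ × E => q p.2) (0, x) :=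
    (hq x hx).comp (0, x) contDiffAt_snd
  have hψ_zero : ContDiffAt ℝ (⊤ : ℕ∞) ψ ((0 : ℝ) * q x) := by
    rw [zero_mul]
    exact hψ.contDiffAt
  exact (hq_snd.pow j).mul (hψ_zero.comp (0, x) (contDiffAt_fst.mul hq_snd))

-- `(Function.swap dslope 0)^[j] ψ` is `ψ` minus its Taylor polynomial of degree `j - 1`, divided by
-- the `j`-th power of the variable.
lemma pow_mul_iterate_dslope_mem_contDiffClosure (hK : IsCompact K)
    (hq : ∀ x ∈ K, ContDiffAt ℝ (⊤ : ℕ∞) q x) {p : FormalMultilinearSeries ℝ ℝ ℝ}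
    (hψ : HasFPowerSeriesAt ψ p 0)
    (h_mem : ∀ᶠ t in 𝓝[>] 0, (fun x => ψ (t * q x)) ∈ contDiffClosure k K W) (j : ℕ) :
    ∀ᶠ t in 𝓝[>] 0, (fun x => q x ^ j * (Function.swap dslope 0)^[j] ψ (t * q x)) ∈
      contDiffClosure k K W := by
  induction j with
  | zero => simpa using h_mem
  | succ j ih =>
    have h_zero := pow_mul_mem_contDiffClosure hK hq
      (hψ.has_fpower_series_iterate_dslope_fslope j).analyticAt ih
    filter_upwards [ih, self_mem_nhdsWithin] with t ht (ht_pos : 0 < t)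
    convert (contDiffClosure k K W).smul_mem t⁻¹ ((contDiffClosure k K W).sub_mem ht h_zero)
      using 1
    ext x
    have h_dslope := sub_smul_dslope ((Function.swap dslope 0)^[j] ψ) 0 (t * q x)
    simp only [sub_zero, smul_eq_mul] at h_dslope
    simp only [Function.iterate_succ_apply', Pi.smul_apply, Pi.sub_apply, smul_eq_mul, ← mul_sub,
      ← h_dslope]
    field_simp
    ring

theorem pow_mem_contDiffClosure (hK : IsCompact K) (hq : ∀ x ∈ K, ContDiffAt ℝ (⊤ : ℕ∞) q x)
    {p : FormalMultilinearSeries ℝ ℝ ℝ} (hψ : HasFPowerSeriesAt ψ p 0) {j : ℕ}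
    (hp : p.coeff j ≠ 0)
    (h_mem : ∀ᶠ t in 𝓝[>] 0, (fun x => ψ (t * q x)) ∈ contDiffClosure k K W) :
    (fun x => q x ^ j) ∈ contDiffClosure k K W := by
  have h_series := hψ.has_fpower_series_iterate_dslope_fslope j
  have h_coeff : (Function.swap dslope 0)^[j] ψ 0 = p.coeff j := by
    rw [← h_series.coeff_zero 1, ← FormalMultilinearSeries.coeff,
      FormalMultilinearSeries.coeff_iterate_fslope, zero_add]
  have h_limit := pow_mul_mem_contDiffClosure hK hq h_series.analyticAt
    (pow_mul_iterate_dslope_mem_contDiffClosure hK hq hψ h_mem j)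
  convert (contDiffClosure k K W).smul_mem (p.coeff j)⁻¹ h_limit using 1
  ext x
  rw [Pi.smul_apply, h_coeff, smul_eq_mul]
  field_simp

end Powers

/-! ### Compactly supported `s`-harmonic functions -/

section SHarmonic

variable {E : Type*} [NormedAddCommGroup E] [InnerProductSpace ℝ E] [FiniteDimensional ℝ E]
  [MeasurableSpace E] [BorelSpace E] {s : ℝ} {K : Set E}

/-- The compactly supported `s`-Hölder functions that are smooth and `s`-harmonic at every point
of `K`. -/
noncomputable def sHarmonicOn (s : ℝ) (K : Set E) : Submodule ℝ (E → ℝ) where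
  carrier := {u | MemHolder s.toNNReal u ∧ HasCompactSupport u ∧
    ∀ x ∈ K, ContDiffAt ℝ (⊤ : ℕ∞) u x ∧ HasFracLaplacianAt s u 0 x}
  zero_mem' := ⟨memHolder_zero, HasCompactSupport.zero,
    fun x _ => ⟨contDiffAt_const, HasFracLaplacianAt.zero s x⟩⟩
  add_mem' := fun ⟨hu, hu_supp, huK⟩ ⟨hv, hv_supp, hvK⟩ => ⟨hu.add hv, hu_supp.add hv_supp,
    fun x hx => ⟨(huK x hx).1.add (hvK x hx).1, by simpa using (huK x hx).2.add (hvK x hx).2⟩⟩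
  smul_mem' := fun c _ ⟨hu, hu_supp, huK⟩ => ⟨hu.smul, hu_supp.smul_left (f := fun _ => c),
    fun x hx => ⟨contDiffAt_const.smul (huK x hx).1, by simpa using (huK x hx).2.const_smul c⟩⟩

lemma getoor_sub_mem_sHarmonicOn [Nontrivial E] (hs : s ∈ Ioo (0 : ℝ) 1) {p : E} {m m' : ℝ}
    (hm : 0 ≤ m) (hm' : 0 ≤ m') (hK : ∀ x ∈ K, ‖x - p‖ ^ 2 < m)
    (hK' : ∀ x ∈ K, ‖x - p‖ ^ 2 < m') : getoor s p m - getoor s p m' ∈ sHarmonicOn s K := by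
  obtain ⟨L, hL⟩ := exists_hasFracLaplacianAt_getoor E hs
  refine ⟨?_, ?_, fun x hx => ⟨?_, ?_⟩⟩
  · simpa [sub_eq_add_neg] using
      (memHolder_getoor hs p hm).add ((memHolder_getoor hs p hm').smul (c := (-1 : ℝ)))
  · exact (hasCompactSupport_getoor hs.1.ne' p m).sub (hasCompactSupport_getoor hs.1.ne' p m')
  · exact (contDiffAt_getoor (hK x hx)).sub (contDiffAt_getoor (hK' x hx))
  · simpa using (hL p m x (hK x hx)).sub (hL p m' x (hK' x hx))

end SHarmonic

lemma ring_choose_ne_zero {R : Type*} [Field R] [CharZero R] {a : R} (ha : ∀ i : ℕ, a ≠ i)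
    (j : ℕ) : Ring.choose a j ≠ 0 := by
  rw [Ring.choose_eq_smul]
  refine smul_ne_zero (inv_ne_zero (mod_cast j.factorial_ne_zero)) ?_
  induction j with
  | zero => simp
  | succ j ih =>
    rw [descPochhammer_succ_right, Polynomial.smeval_mul]
    refine mul_ne_zero ih ?_
    simpa [Polynomial.smeval_sub, Polynomial.smeval_natCast, sub_ne_zero] using ha j

lemma hasFPowerSeriesAt_truncPow_one_add (s : ℝ) :
    HasFPowerSeriesAt (fun z => truncPow s (1 + z)) (binomialSeries ℝ s) 0 := by
  refine Real.one_add_rpow_hasFPowerSeriesAt_zero.congr ?_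
  filter_upwards [Ioi_mem_nhds (show (-1 : ℝ) < 0 by norm_num)] with z (hz : -1 < z)
  rw [truncPow_of_nonneg (by linarith)]

-- Subtracting `truncPow s (2 + z)` multiplies the `j`-th binomial coefficient by `1 - 2 ^ (s - j)`.
lemma exists_hasFPowerSeriesAt_truncPow_sub {s : ℝ} (hs : ∀ i : ℕ, s ≠ i) :
    ∃ p, HasFPowerSeriesAt (fun z => truncPow s (1 + z) - truncPow s (2 + z)) p 0 ∧
      ∀ j, p.coeff j ≠ 0 := by
  let half : ℝ →L[ℝ] ℝ := (2⁻¹ : ℝ) • .id ℝ ℝ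
  have h_one := hasFPowerSeriesAt_truncPow_one_add s
  have h_half := (map_zero half ▸ h_one).compContinuousLinearMap
  have h_two : (fun z => truncPow s (2 + z)) =
      (2 : ℝ) ^ s • (fun z => truncPow s (1 + z)) ∘ half := by
    ext z
    simp only [Pi.smul_apply, smul_eq_mul, Function.comp_apply, ← truncPow_mul s zero_le_two]
    congr 1
    simp [half, mul_add]
  refine ⟨_, h_one.sub (h_two ▸ h_half.const_smul), fun j => ?_⟩
  have h_coeff : (binomialSeries ℝ s - (2 : ℝ) ^ s •
      (binomialSeries ℝ s).compContinuousLinearMap half).coeff j =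
      Ring.choose s j * (1 - (2 : ℝ) ^ (s - j)) := by
    have h_binomial (v : Fin j → ℝ) : binomialSeries ℝ s j v = Ring.choose s j * ∏ i, v i := by
      rw [binomialSeries_apply, List.prod_ofFn, smul_eq_mul]
    have h_half_one : half ∘ (1 : Fin j → ℝ) = fun _ => 2⁻¹ := by ext; simp [half]
    rw [Real.rpow_sub_natCast two_ne_zero, FormalMultilinearSeries.coeff,
      FormalMultilinearSeries.sub_apply, FormalMultilinearSeries.smul_apply, sub_apply, smul_apply,
      FormalMultilinearSeries.compContinuousLinearMap_apply, h_half_one, h_binomial, h_binomial]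
    simp only [Pi.one_apply, Finset.prod_const, Finset.card_univ, Fintype.card_fin, one_pow,
      inv_pow, smul_eq_mul]
    ring
  rw [h_coeff]
  refine mul_ne_zero (ring_choose_ne_zero hs j) (sub_ne_zero.2 fun h_eq => hs j ?_)
  rw [← Real.rpow_zero 2, Real.rpow_right_inj two_pos (by norm_num)] at h_eq
  linarith

section SHarmonicClosure

variable {E : Type*} [NormedAddCommGroup E] [InnerProductSpace ℝ E] [FiniteDimensional ℝ E]
  [MeasurableSpace E] [BorelSpace E] [Nontrivial E] {s : ℝ} {K : Set E}

-- By homogeneity, the function in question is `t ^ s` times a difference of two Getoor functions.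
lemma eventually_truncPow_sub_mem_contDiffClosure (hs : s ∈ Ioo (0 : ℝ) 1) (k : ℕ)
    (hK : IsCompact K) (p : E) :
    ∀ᶠ t in 𝓝[>] 0,
      (fun x => truncPow s (1 + t * -‖x - p‖ ^ 2) - truncPow s (2 + t * -‖x - p‖ ^ 2)) ∈
        contDiffClosure k K (sHarmonicOn s K) := by
  obtain ⟨M, hM⟩ := hK.exists_bound_of_continuousOn
    (f := fun x => ‖x - p‖ ^ 2) (Continuous.continuousOn (by fun_prop))
  have hM_small : ∀ᶠ t : ℝ in 𝓝[>] 0, t * M < 1 :=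
    ((continuous_mul_const M).tendsto' 0 0 (zero_mul M)).mono_left nhdsWithin_le_nhds
      |>.eventually_lt_const one_pos
  filter_upwards [hM_small, self_mem_nhdsWithin] with t ht_small (ht : 0 < t)
  have h_one (x : E) (hx : x ∈ K) : ‖x - p‖ ^ 2 < 1 / t := by
    rw [lt_div_iff₀' ht]
    have h_le := (Real.norm_of_nonneg (sq_nonneg ‖x - p‖)).symm.trans_le (hM x hx)
    exact (mul_le_mul_of_nonneg_left h_le ht.le).trans_lt ht_small
  have h_two (x : E) (hx : x ∈ K) : ‖x - p‖ ^ 2 < 2 / t :=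
    (h_one x hx).trans (by gcongr; norm_num)
  have h_mem := mem_contDiffClosure_of_mem (k := k)
    (getoor_sub_mem_sHarmonicOn hs (by positivity) (by positivity) h_one h_two)
    fun x hx => (contDiffAt_getoor (h_one x hx)).sub (contDiffAt_getoor (h_two x hx))
  convert (contDiffClosure k K _).smul_mem (t ^ s) h_mem using 1
  ext x
  simp only [Pi.smul_apply, Pi.sub_apply, smul_eq_mul, getoor, mul_sub, ← truncPow_mul s ht.le]
  congr 2 <;> field_simp <;> ring

lemma neg_norm_sub_sq_pow_mem_contDiffClosure (hs : s ∈ Ioo (0 : ℝ) 1) (k : ℕ)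
    (hK : IsCompact K) (p : E) (j : ℕ) :
    (fun x => (-‖x - p‖ ^ 2) ^ j) ∈ contDiffClosure k K (sHarmonicOn s K) := by
  have hs_nat (i : ℕ) : s ≠ i := by
    rintro rfl
    have h_pos : 0 < i := mod_cast hs.1
    exact (mod_cast hs.2 : i < 1).not_ge h_pos
  obtain ⟨series, h_series, h_coeff⟩ := exists_hasFPowerSeriesAt_truncPow_sub hs_nat
  exact pow_mem_contDiffClosure hK
    (fun x _ => ((contDiff_fun_id.sub contDiff_const).norm_sq ℝ).neg.contDiffAt) h_series
    (h_coeff j) (eventually_truncPow_sub_mem_contDiffClosure hs k hK p)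

lemma one_sub_norm_sub_sq_div_pow_mem_contDiffClosure (hs : s ∈ Ioo (0 : ℝ) 1) (k : ℕ)
    (hK : IsCompact K) (p : E) (c : ℝ) (m : ℕ) :
    (fun x => (1 - ‖x - p‖ ^ 2 / c) ^ m) ∈ contDiffClosure k K (sHarmonicOn s K) := by
  have h_expand : (fun x => (1 - ‖x - p‖ ^ 2 / c) ^ m) = ∑ j ∈ Finset.range (m + 1),
      ((c⁻¹) ^ j * (m.choose j : ℝ)) • fun x => (-‖x - p‖ ^ 2) ^ j := by
    ext x
    rw [sub_eq_neg_add, add_pow, Finset.sum_apply]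
    refine Finset.sum_congr rfl fun j _ => ?_
    rw [one_pow, Pi.smul_apply, smul_eq_mul, ← neg_div, div_pow, inv_pow]
    ring
  rw [h_expand]
  exact Submodule.sum_mem _ fun j _ =>
    Submodule.smul_mem _ _ (neg_norm_sub_sq_pow_mem_contDiffClosure hs k hK p j)

end SHarmonicClosure

/-! ### Separable kernels -/

section Separable

variable {X Y : Type*}

lemma integral_apply_mem {V : Type*} [NormedAddCommGroup V] [NormedSpace ℝ V]
    [FiniteDimensional ℝ V] [MeasurableSpace Y] {μ : Measure Y} {h : Y → V} (hh : Integrable h μ)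
    (T : V →ₗ[ℝ] X → ℝ) {W : Submodule ℝ (X → ℝ)} (hW : ∀ y, T (h y) ∈ W) :
    (fun x => ∫ y, T (h y) x ∂μ) ∈ W := by
  have h_integral (ℓ : V →ₗ[ℝ] ℝ) : ∫ y, ℓ (h y) ∂μ = ℓ (∫ y, h y ∂μ) :=
    ℓ.toContinuousLinearMap.integral_comp_comm hh
  have h_mem : ∫ y, h y ∂μ ∈ W.comap T := by
    by_contra h_notMem
    obtain ⟨ℓ, h_ne, h_ker⟩ := (W.comap T).exists_le_ker_of_notMem h_notMem
    refine h_ne ?_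
    rw [← h_integral]
    exact integral_eq_zero_of_ae (.of_forall fun y => h_ker (hW y))
  rw [Submodule.mem_comap] at h_mem
  convert h_mem using 1
  ext x
  exact h_integral (LinearMap.proj x ∘ₗ T)

variable [TopologicalSpace Y]

/-- A kernel `Φ x y` that is a finite sum of products `φ x * ψ y` with `ψ` continuous. -/
def IsSeparableKernel (Φ : X → Y → ℝ) : Prop :=
  ∃ (ι : Type) (_ : Fintype ι) (φ : ι → X → ℝ) (ψ : ι → Y → ℝ),
    (∀ i, Continuous (ψ i)) ∧ ∀ x y, Φ x y = ∑ i, φ i x * ψ i y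

namespace IsSeparableKernel

variable {Φ : X → Y → ℝ}

lemma pow (hΦ : IsSeparableKernel Φ) (m : ℕ) : IsSeparableKernel fun x y => Φ x y ^ m := by
  obtain ⟨ι, _, φ, ψ, hψ, h_eq⟩ := hΦ
  classical
  refine ⟨Fin m → ι, inferInstance, fun a x => ∏ i, φ (a i) x, fun a y => ∏ i, ψ (a i) y,
    fun a => continuous_finsetProd _ fun i _ => hψ (a i), fun x y => ?_⟩
  simp only [h_eq, Fintype.sum_pow, ← Finset.prod_mul_distrib]

lemma integral_mem [MeasurableSpace Y] [OpensMeasurableSpace Y] {μ : Measure Y}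
    [IsFiniteMeasureOnCompacts μ] (hΦ : IsSeparableKernel Φ) {g : Y → ℝ} (hg : Continuous g)
    (hg_supp : HasCompactSupport g) {W : Submodule ℝ (X → ℝ)} (hW : ∀ y, (fun x => Φ x y) ∈ W) :
    (fun x => ∫ y, Φ x y * g y ∂μ) ∈ W := by
  obtain ⟨ι, _, φ, ψ, hψ, h_eq⟩ := hΦ
  have h_apply (y : Y) :
      Fintype.linearCombination ℝ φ (fun i => ψ i y * g y) = g y • fun x => Φ x y := by
    ext x
    simp only [Fintype.linearCombination_apply, Finset.sum_apply, Pi.smul_apply, smul_eq_mul, h_eq,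
      Finset.mul_sum]
    exact Finset.sum_congr rfl fun i _ => by ring
  have h_int : Integrable (fun y i => ψ i y * g y) μ := Integrable.of_eval fun i =>
    ((hψ i).mul hg).integrable_of_hasCompactSupport hg_supp.mul_left
  convert integral_apply_mem h_int (Fintype.linearCombination ℝ φ) (W := W)
    fun y => h_apply y ▸ W.smul_mem (g y) (hW y) using 3 with x
  ext y
  rw [h_apply, Pi.smul_apply, smul_eq_mul, mul_comm]

end IsSeparableKernel

lemma isSeparableKernel_one_sub_norm_sub_sq_div {E : Type*} [NormedAddCommGroup E]
    [InnerProductSpace ℝ E] [FiniteDimensional ℝ E] (c : ℝ) :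
    IsSeparableKernel fun x y : E => 1 - ‖x - y‖ ^ 2 / c := by
  let b := stdOrthonormalBasis ℝ E
  refine ⟨Option (Option (Fin (Module.finrank ℝ E))), inferInstance,
    fun o x => o.elim (1 - ‖x‖ ^ 2 / c) (·.elim 1 fun i => 2 / c * inner ℝ x (b i)),
    fun o y => o.elim 1 (·.elim (-‖y‖ ^ 2 / c) fun i => inner ℝ (b i) y), ?_, fun x y => ?_⟩
  · rintro (_ | _ | i) <;> simp only [Option.elim] <;> fun_prop
  · simp only [Fintype.sum_option, Option.elim, mul_assoc, ← Finset.mul_sum,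
      b.sum_inner_mul_inner, norm_sub_sq_real]
    ring

end Separable

/-! ### Convolution with a compactly supported kernel -/

section Convolution

open scoped Convolution

variable {E F : Type*} [NormedAddCommGroup E] [NormedSpace ℝ E] [NormedAddCommGroup F]
  [NormedSpace ℝ F] [MeasurableSpace E] [BorelSpace E] {μ : Measure E}

lemma iteratedFDeriv_convolution_right [SFinite μ] [μ.IsAddLeftInvariant]
    {φ : E → ℝ} (hφ : LocallyIntegrable φ μ) {g : E → F} (hg_supp : HasCompactSupport g) {j : ℕ}
    (hg : ContDiff ℝ j g) : iteratedFDeriv ℝ j (φ ⋆[.lsmul ℝ ℝ, μ] g) =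
      φ ⋆[.lsmul ℝ ℝ, μ] iteratedFDeriv ℝ j g := by
  induction j with
  | zero =>
    ext1 x
    simp only [iteratedFDeriv_zero_eq_comp, convolution_def, Function.comp_apply]
    exact ((continuousMultilinearCurryFin0 ℝ E F).symm.toContinuousLinearEquiv
      |>.integral_comp_comm _).symm
  | succ j ih =>
    ext1 x
    rw [iteratedFDeriv_succ_eq_comp_left, iteratedFDeriv_succ_eq_comp_left, ih (hg.of_le (by simp)),
      Function.comp_apply, ((hg_supp.iteratedFDeriv j).hasFDerivAt_convolution_right _ hφ
        (hg.iteratedFDeriv_right (by simp [add_comm])) x).fderiv]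
    exact (ContinuousLinearEquiv.integral_comp_comm (𝕜 := ℝ) (E := E →L[ℝ] E [×j]→L[ℝ] F)
      (F := E [×(j + 1)]→L[ℝ] F) (continuousMultilinearCurryLeftEquiv ℝ
      (fun _ : Fin (j + 1) => E) F).symm.toContinuousLinearEquiv
      fun t => φ t • fderiv ℝ (iteratedFDeriv ℝ j g) (x - t)).symm

variable [FiniteDimensional ℝ E] [CompleteSpace F] [μ.IsAddHaarMeasure]

lemma tendstoUniformlyOn_peak_convolution {w : E → ℝ} {s : Set E} (hs : IsCompact s)
    (hw : ContinuousOn w s) (hw_max : ∀ z ∈ s, z ≠ 0 → w z < w 0) (hw_nonneg : ∀ z ∈ s, 0 ≤ w z)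
    (hw_pos : 0 < w 0) (hs_zero : 0 ∈ interior s) {h : E → F} (hh : Continuous h) {K : Set E}
    (hK : IsCompact K) :
    TendstoUniformlyOn (fun (m : ℕ) x => (∫ z in s, w z ^ m ∂μ)⁻¹ •
      (s.indicator (w ^ m) ⋆[.lsmul ℝ ℝ, μ] h) x) h atTop K := by
  have : CompactSpace K := isCompact_iff_compactSpace.1 hK
  let H : C(E, C(K, F)) := ContinuousMap.curry ⟨fun q : E × K => h (q.2 - q.1), by fun_prop⟩
  have h_peak := tendsto_setIntegral_pow_smul_of_unique_maximum_of_isCompact_of_continuousOn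
    (μ := μ) hs hw hw_max hw_nonneg hw_pos (subset_closure hs_zero) H.continuous.continuousOn
  rw [ContinuousMap.tendsto_iff_tendstoUniformly] at h_peak
  rw [tendstoUniformlyOn_iff_tendstoUniformly_comp_coe]
  convert h_peak using 1
  · ext m x
    have h_eval : (∫ z in s, w z ^ m • H z ∂μ) x = ∫ z in s, w z ^ m • h (x - z) ∂μ :=
      ((ContinuousMap.evalCLM ℝ x).integral_comp_comm
        (((hw.pow m).smul H.continuous.continuousOn).integrableOn_compact hs)).symm
    rw [ContinuousMap.smul_apply, h_eval, ← integral_indicator (f := fun z => _ • _)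
      hs.measurableSet, indicator_smul_left]
    rfl
  · ext x
    simp [H]

end Convolution

/-! ### Density of `s`-harmonic functions -/

lemma exists_contDiff_hasCompactSupport_eventuallyEq {E F : Type*} [NormedAddCommGroup E]
    [NormedSpace ℝ E] [FiniteDimensional ℝ E] [NormedAddCommGroup F] [NormedSpace ℝ F] {k : ℕ}
    {K : Set E} (hK : IsCompact K) {f : E → F} (hf : ∀ x ∈ K, ContDiffAt ℝ k f x) :
    ∃ g : E → F, ContDiff ℝ k g ∧ HasCompactSupport g ∧ ∀ x ∈ K, g =ᶠ[𝓝 x] f := by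
  let U : Set E := {x | ContDiffAt ℝ k f x}
  have hU : IsOpen U := isOpen_iff_eventually.2 fun x (hx : ContDiffAt ℝ k f x) =>
    hx.eventually (by simp)
  obtain ⟨L, hL, hKL, hLU⟩ := exists_compact_between hK hU hf
  obtain ⟨χ, hχ_one, hχ_zero, -⟩ := exists_contMDiffMap_one_nhds_of_subset_interior (n := (k : ℕ∞))
    (modelWithCornersSelf ℝ E) hK.isClosed hKL
  have hχ : ContDiff ℝ k χ := contMDiff_iff_contDiff.1 χ.contMDiff
  have hχ_supp : tsupport χ ⊆ L :=
    closure_minimal (Function.support_subset_iff'.2 hχ_zero) hL.isClosed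
  refine ⟨fun x => χ x • f x, contDiff_iff_contDiffAt.2 fun x => ?_,
    (HasCompactSupport.of_support_subset_isCompact hL
      (Function.support_subset_iff'.2 hχ_zero)).smul_right, fun x hx => ?_⟩
  · by_cases hx : x ∈ U
    · exact hχ.contDiffAt.smul hx
    · have hχ_near := notMem_tsupport_iff_eventuallyEq.1 fun h => hx (hLU (hχ_supp h))
      refine (contDiffAt_const (c := 0)).congr_of_eventuallyEq ?_
      filter_upwards [hχ_near] with y hy
      rw [hy, Pi.zero_apply, zero_smul]
  · filter_upwards [hχ_one.filter_mono (nhds_le_nhdsSet hx)] with y hy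
    rw [hy, one_smul]

section Density

open scoped Convolution

variable {E : Type*} [NormedAddCommGroup E]

/-- The unnormalised Landau kernel. -/
noncomputable def landauKernel (r : ℝ) (m : ℕ) : E → ℝ :=
  (closedBall 0 r).indicator ((fun z => 1 - ‖z‖ ^ 2 / r ^ 2) ^ m)

variable [InnerProductSpace ℝ E] [FiniteDimensional ℝ E] [MeasurableSpace E] [BorelSpace E] {r : ℝ}

lemma locallyIntegrable_landauKernel (r : ℝ) (m : ℕ) :
    LocallyIntegrable (landauKernel r m : E → ℝ) := by
  refine Integrable.locallyIntegrable
    (IntegrableOn.integrable_indicator ?_ measurableSet_closedBall)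
  exact (Continuous.continuousOn (by fun_prop)).integrableOn_compact (isCompact_closedBall 0 r)

lemma tendstoUniformlyOn_landauKernel_convolution {F : Type*} [NormedAddCommGroup F]
    [NormedSpace ℝ F] [CompleteSpace F] (hr : 0 < r) {h : E → F} (hh : Continuous h) {K : Set E}
    (hK : IsCompact K) :
    TendstoUniformlyOn
      (fun (m : ℕ) x => (∫ z in closedBall (0 : E) r, (1 - ‖z‖ ^ 2 / r ^ 2) ^ m)⁻¹ •
        (landauKernel r m ⋆[.lsmul ℝ ℝ] h) x) h atTop K := by
  refine tendstoUniformlyOn_peak_convolution (w := fun z => 1 - ‖z‖ ^ 2 / r ^ 2)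
    (isCompact_closedBall 0 r) (Continuous.continuousOn (by fun_prop)) (fun z _ hz => ?_)
    (fun z hz => ?_) (by simp) ?_ hh hK
  · have : 0 < ‖z‖ ^ 2 / r ^ 2 := by positivity
    simpa using this
  · rw [sub_nonneg, ← div_pow]
    exact pow_le_one₀ (by positivity) ((div_le_one hr).2 (mem_closedBall_zero_iff.1 hz))
  · exact ball_subset_interior_closedBall (mem_ball_self hr)

variable [Nontrivial E] {s : ℝ} {k : ℕ} {K : Set E} {g : E → ℝ}

lemma landauKernel_convolution_mem_contDiffClosure (hs : s ∈ Ioo (0 : ℝ) 1) (k : ℕ)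
    (hK : IsCompact K) (hg : Continuous g) (hg_supp : HasCompactSupport g) {R : ℝ}
    (hKR : K ⊆ ball 0 R) (hgR : Function.support g ⊆ ball 0 R) (m : ℕ) :
    (landauKernel (2 * R) m ⋆[.lsmul ℝ ℝ] g) ∈ contDiffClosure k K (sHarmonicOn s K) := by
  have h_sep := (isSeparableKernel_one_sub_norm_sub_sq_div (E := E) ((2 * R) ^ 2)).pow m
  refine mem_contDiffClosure_congr (h_sep.integral_mem (μ := volume) hg hg_supp
    fun y => one_sub_norm_sub_sq_div_pow_mem_contDiffClosure hs k hK y _ m) fun x hx => ?_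
  filter_upwards [isOpen_ball.mem_nhds (hKR hx)] with x' hx'
  rw [convolution_lsmul_swap]
  refine integral_congr_ae (.of_forall fun y => ?_)
  by_cases hy : y ∈ Function.support g
  · have h_mem : x' - y ∈ closedBall (0 : E) (2 * R) := by
      have := mem_ball_zero_iff.1 hx'
      have := mem_ball_zero_iff.1 (hgR hy)
      rw [mem_closedBall_zero_iff]
      linarith [norm_sub_le x' y]
    simp only [landauKernel, indicator_of_mem h_mem, Pi.pow_apply, smul_eq_mul]
  · simp only [Function.notMem_support.1 hy, mul_zero, smul_zero]

lemma mem_contDiffClosure_sHarmonicOn_of_hasCompactSupport (hs : s ∈ Ioo (0 : ℝ) 1)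
    (hK : IsCompact K) (hg : ContDiff ℝ k g) (hg_supp : HasCompactSupport g) :
    g ∈ contDiffClosure k K (sHarmonicOn s K) := by
  refine mem_contDiffClosure_of_approx (fun x _ => hg.contDiffAt) fun ε hε => ?_
  obtain ⟨R, hR, hKR⟩ := (hK.union hg_supp).isBounded.subset_ball_lt 0 0
  rw [union_subset_iff] at hKR
  have h_mem := landauKernel_convolution_mem_contDiffClosure hs k hK hg.continuous hg_supp hKR.1
    ((subset_tsupport g).trans hKR.2)
  have h_unif : ∀ j ≤ k, ∀ᶠ m : ℕ in atTop, ∀ x ∈ K,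
      ‖(∫ z in closedBall (0 : E) (2 * R), (1 - ‖z‖ ^ 2 / (2 * R) ^ 2) ^ m)⁻¹ •
        (landauKernel (2 * R) m ⋆[.lsmul ℝ ℝ] iteratedFDeriv ℝ j g) x -
          iteratedFDeriv ℝ j g x‖ < ε := by
    intro j hj
    have h_tendsto := tendstoUniformlyOn_landauKernel_convolution (r := 2 * R) (by positivity)
      (hg.continuous_iteratedFDeriv (mod_cast hj)) hK
    simpa only [dist_eq_norm'] using Metric.tendstoUniformlyOn_iff.1 h_tendsto ε hε
  obtain ⟨m, hm⟩ := ((eventually_all_finite (finite_le_nat k)).2 h_unif).exists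
  refine ⟨_, Submodule.smul_mem _
    (∫ z in closedBall (0 : E) (2 * R), (1 - ‖z‖ ^ 2 / (2 * R) ^ 2) ^ m)⁻¹ (h_mem m),
    fun j hj x hx => ?_⟩
  rw [iteratedFDeriv_const_smul_apply (((h_mem m).1 x hx).of_le (mod_cast hj)),
    iteratedFDeriv_convolution_right (locallyIntegrable_landauKernel _ m) hg_supp
      (hg.of_le (mod_cast hj))]
  exact hm j hj x hx

theorem all_functions_locally_sHarmonic_general (hs : s ∈ Ioo (0 : ℝ) 1) (hK : IsCompact K)
    {f : E → ℝ} (hf : ∀ x ∈ K, ContDiffAt ℝ k f x) :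
    f ∈ contDiffClosure k K (sHarmonicOn s K) := by
  obtain ⟨g, hg, hg_supp, hgf⟩ := exists_contDiff_hasCompactSupport_eventuallyEq hK hf
  exact mem_contDiffClosure_congr
    (mem_contDiffClosure_sHarmonicOn_of_hasCompactSupport hs hK hg hg_supp) hgf

end Density

/-! ### Partial derivatives -/

lemma foldr_fderiv_eq_iteratedFDeriv {𝕜 E F : Type*} [NontriviallyNormedField 𝕜]
    [NormedAddCommGroup E] [NormedSpace 𝕜 E] [NormedAddCommGroup F] [NormedSpace 𝕜 F]
    {f : E → F} (w : List E) {x : E} (hf : ContDiffAt 𝕜 w.length f x) :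
    w.foldr (fun v g y => fderiv 𝕜 g y v) f x = iteratedFDeriv 𝕜 w.length f x w.get := by
  induction w generalizing x with
  | nil => simp
  | cons v w ih =>
    have hf' : ContDiffAt 𝕜 (w.length + 1 : ℕ) f x := hf
    have h_near : w.foldr (fun v g y => fderiv 𝕜 g y v) f =ᶠ[𝓝 x]
        fun y => iteratedFDeriv 𝕜 w.length f y w.get := by
      filter_upwards [hf'.eventually (by simp)] with y hy
      exact ih (hy.of_le (mod_cast w.length.le_succ))
    have h_diff : DifferentiableAt 𝕜 (iteratedFDeriv 𝕜 w.length f) x :=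
      hf'.differentiableAt_iteratedFDeriv (mod_cast w.length.lt_succ_self)
    rw [List.foldr_cons, h_near.fderiv_eq]
    exact (h_diff.iteratedFDeriv_succ_apply_left' (m := (v :: w).get)).symm

/-- The coordinate directions, with repetitions, along which `multiDeriv n β` differentiates. -/
noncomputable def multiIndexDirections {n : ℕ} (β : Fin n → ℕ) : List (EuclideanSpace ℝ (Fin n)) :=
  (List.finRange n).flatMap fun i => List.replicate (β i) (EuclideanSpace.single i 1)

section MultiIndex

variable {n : ℕ} (β : Fin n → ℕ)

lemma length_multiIndexDirections : (multiIndexDirections β).length = ∑ i, β i := by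
  simp [multiIndexDirections, List.length_flatMap, Fin.sum_univ_def]

variable {β} in
lemma norm_of_mem_multiIndexDirections {v : EuclideanSpace ℝ (Fin n)}
    (hv : v ∈ multiIndexDirections β) : ‖v‖ = 1 := by
  obtain ⟨i, -, hi⟩ := List.mem_flatMap.1 hv
  rw [List.eq_of_mem_replicate hi, PiLp.norm_single, norm_one]

lemma multiDeriv_eq_foldr_fderiv (f : EuclideanSpace ℝ (Fin n) → ℝ) :
    multiDeriv n β f = (multiIndexDirections β).foldr (fun v g y => fderiv ℝ g y v) f := by
  have h_iterate (i : Fin n) (m : ℕ) (g : EuclideanSpace ℝ (Fin n) → ℝ) :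
      (List.replicate m (EuclideanSpace.single i 1)).foldr (fun v g y => fderiv ℝ g y v) g =
        (partialDeriv n i)^[m] g := by
    induction m with
    | zero => rfl
    | succ m ih => rw [List.replicate_succ, List.foldr_cons, ih, Function.iterate_succ_apply']; rfl
  rw [multiIndexDirections, List.foldr_flatMap, multiDeriv, List.ofFn_eq_map, List.foldr_map]
  simp_rw [h_iterate]
  induction List.finRange n with
  | nil => rfl
  | cons i l ih => rw [List.foldr_cons, List.foldr_cons, Function.comp_apply, ih]

lemma abs_multiDeriv_sub_le {f g : EuclideanSpace ℝ (Fin n) → ℝ} {x : EuclideanSpace ℝ (Fin n)}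
    (hf : ContDiffAt ℝ (∑ i, β i : ℕ) f x) (hg : ContDiffAt ℝ (∑ i, β i : ℕ) g x) :
    |multiDeriv n β f x - multiDeriv n β g x| ≤
      ‖iteratedFDeriv ℝ (∑ i, β i) f x - iteratedFDeriv ℝ (∑ i, β i) g x‖ := by
  rw [multiDeriv_eq_foldr_fderiv, multiDeriv_eq_foldr_fderiv]
  rw [← length_multiIndexDirections] at hf hg ⊢
  set w := multiIndexDirections β
  have h_norm (j : Fin w.length) : ‖w.get j‖ = 1 :=
    norm_of_mem_multiIndexDirections (w.get_mem j)
  rw [foldr_fderiv_eq_iteratedFDeriv w hf, foldr_fderiv_eq_iteratedFDeriv w hg,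
    ← sub_apply, ← Real.norm_eq_abs]
  refine (ContinuousMultilinearMap.le_opNorm _ w.get).trans_eq ?_
  simp only [h_norm, Finset.prod_const_one, mul_one]

end MultiIndex

/-- All functions are locally `s`-harmonic up to a small error.
If `f` is `C^k` on a neighborhood of the closed unit ball, then for every
`ε > 0` there exist `R > 1` and `u : ℝⁿ → ℝ`, Hölder continuous of exponent
`s` on `ℝⁿ`, vanishing outside `B_R`, `s`-harmonic at every point of `B₁` and
`C^∞` on `B₁`, with `sup_{B₁} |D^β u − D^β f| < ε` for all `|β| ≤ k`. -/
theorem all_functions_locally_sHarmonic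
    (n : ℕ) (hn : 1 ≤ n) (s : ℝ) (hs : s ∈ Set.Ioo (0:ℝ) 1) (k : ℕ)
    (f : EuclideanSpace ℝ (Fin n) → ℝ)
    (hf : ∃ U : Set (EuclideanSpace ℝ (Fin n)), IsOpen U ∧
      Metric.closedBall (0 : EuclideanSpace ℝ (Fin n)) 1 ⊆ U ∧ ContDiffOn ℝ k f U) :
    ∀ ε : ℝ, 0 < ε →
      ∃ R : ℝ, 1 < R ∧
        ∃ u : EuclideanSpace ℝ (Fin n) → ℝ,
          (∃ C : ℝ, ∀ x y, |u x - u y| ≤ C * ‖x - y‖ ^ s) ∧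
          (∀ x ∉ Metric.ball (0 : EuclideanSpace ℝ (Fin n)) R, u x = 0) ∧
          (∀ x ∈ Metric.ball (0 : EuclideanSpace ℝ (Fin n)) 1,
            Filter.Tendsto
              (fun δ : ℝ => ∫ y in {y : EuclideanSpace ℝ (Fin n) | δ < ‖y - x‖},
                (u x - u y) / ‖x - y‖ ^ ((n : ℝ) + 2 * s))
              (𝓝[>] (0:ℝ)) (𝓝 0)) ∧
          ContDiffOn ℝ (⊤ : ℕ∞) u (Metric.ball (0 : EuclideanSpace ℝ (Fin n)) 1) ∧
          ∀ β : Fin n → ℕ, (∑ i, β i) ≤ k →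
            ∀ x ∈ Metric.ball (0 : EuclideanSpace ℝ (Fin n)) 1,
              |multiDeriv n β u x - multiDeriv n β f x| < ε := by
  intro ε hε
  obtain ⟨U, hU, hBU, hf⟩ := hf
  have : Nonempty (Fin n) := ⟨0, hn⟩
  have hf_at : ∀ x ∈ closedBall (0 : EuclideanSpace ℝ (Fin n)) 1, ContDiffAt ℝ k f x :=
    fun x hx => hf.contDiffAt (hU.mem_nhds (hBU hx))
  obtain ⟨u, ⟨⟨C, hC⟩, h_supp, hu⟩, hu_at, h_close⟩ :=
    (all_functions_locally_sHarmonic_general hs (isCompact_closedBall 0 1) hf_at).2 ε hε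
  obtain ⟨R, hR, h_supp_ball⟩ := h_supp.isBounded.subset_ball_lt 1 0
  refine ⟨R, hR, u, ⟨C, fun x y => ?_⟩, fun x hx => ?_, fun x hx => ?_, fun x hx => ?_,
    fun β hβ x hx => ?_⟩
  · simpa only [dist_eq_norm, Real.norm_eq_abs, Real.coe_toNNReal s hs.1.le] using hC.dist_le x y
  · exact image_eq_zero_of_notMem_tsupport fun h => hx (h_supp_ball h)
  · simpa only [fracKernel, finrank_euclideanSpace_fin] using
      (hu x (ball_subset_closedBall hx)).2.tendsto
  · exact (hu x (ball_subset_closedBall hx)).1.contDiffWithinAt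
  · have hx' := ball_subset_closedBall hx
    have h_le : ((∑ i, β i : ℕ) : WithTop ℕ∞) ≤ k := mod_cast hβ
    exact (abs_multiDeriv_sub_le β ((hu_at x hx').of_le h_le) ((hf_at x hx').of_le h_le)).trans_lt
      (h_close _ hβ x hx')
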